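/- There is no primitive non-constant arithmetic progression of integers of the form $x_1^5, x_2^2, x_3^2, x_4^5$ (four terms, with exponent pattern $(5,2,2,5)$). -/

import Mathlib

open NumberField Polynomial

/-- The companion matrix of `X ^ 5 - 2`. -/
def companionMatrix : Matrix (Fin 5) (Fin 5) ℤ :=
  !![0, 0, 0, 0, 2; 1, 0, 0, 0, 0; 0, 1, 0, 0, 0; 0, 0, 1, 0, 0; 0, 0, 0, 1, 0]

theorem two_ne_fifth_power (b : ℚ) : b ^ 5 ≠ 2 := by
  intro h
  have : Fact (Nat.Prime 2) := ⟨Nat.prime_two⟩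
  have h2 := congrArg (padicValRat 2) h
  rcases eq_or_ne b 0 with rfl | hb
  · norm_num at h
  rw [padicValRat.pow] at h2
  have : padicValRat 2 (2 : ℚ) = 1 := by
    have := padicValRat.self (p := 2) (by norm_num)
    exact_mod_cast this
  rw [this] at h2
  push_cast at h2
  omega

theorem irreducible_X_pow_five_sub_two : Irreducible (X ^ 5 - C 2 : ℚ[X]) :=
  X_pow_sub_C_irreducible_of_prime (by norm_num) two_ne_fifth_power

theorem coe_pow_five {K : Type*} [Field K] {θ : 𝓞 K} (hθ : θ ^ 5 = 2) : (θ : K) ^ 5 = 2 := by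
  have := congrArg (algebraMap (𝓞 K) K) hθ
  rwa [map_pow, map_ofNat] at this

section NumberFieldFacts
variable {K : Type*} [Field K] [NumberField K] {θ : 𝓞 K}

theorem minpoly_of_pow_five_eq_two (hθ : θ ^ 5 = 2) : minpoly ℚ (θ : K) = X ^ 5 - C 2 := by
  symm
  refine minpoly.eq_of_irreducible_of_monic irreducible_X_pow_five_sub_two ?_
    (monic_X_pow_sub_C _ (by norm_num))
  have : (θ : K) ^ 5 = 2 := coe_pow_five hθ
  simp [this]

/-- The power basis `1, θ, …, θ ^ 4`. -/
noncomputable def fifthRootBasis (hθ : θ ^ 5 = 2) (hK : Module.finrank ℚ K = 5) :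
    Module.Basis (Fin 5) ℚ K :=
  basisOfLinearIndependentOfCardEqFinrank (b := fun i : Fin 5 => (θ : K) ^ (i : ℕ))
    (by
      have h := linearIndependent_pow (K := ℚ) (θ : K)
      have hd : (minpoly ℚ (θ : K)).natDegree = 5 := by
        rw [minpoly_of_pow_five_eq_two hθ, natDegree_X_pow_sub_C]
      rw [hd] at h
      exact h) (by simp [hK])

theorem fifthRootBasis_apply (hθ : θ ^ 5 = 2) (hK : Module.finrank ℚ K = 5) (i : Fin 5) :
    fifthRootBasis hθ hK i = (θ : K) ^ (i : ℕ) := by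
  simp [fifthRootBasis]

theorem leftMulMatrix_fifthRootBasis (hθ : θ ^ 5 = 2) (hK : Module.finrank ℚ K = 5) :
    Algebra.leftMulMatrix (fifthRootBasis hθ hK) (θ : K) =
      (Int.castRingHom ℚ).mapMatrix companionMatrix := by
  have h5 : (θ : K) ^ 5 = 2 := coe_pow_five hθ
  set b := fifthRootBasis hθ hK with hb
  have hbi : ∀ i : Fin 5, b i = (θ : K) ^ (i : ℕ) := fifthRootBasis_apply hθ hK
  have key : ∀ j : Fin 5, (θ : K) * b j =
      if j = 4 then (2 : ℚ) • b 0 else b (j + 1) := by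
    intro j
    fin_cases j
    · simp [hbi]
    · simp [hbi]; ring
    · simp [hbi]; ring
    · simp [hbi]; ring
    · simp [hbi, ← pow_succ', h5, Algebra.smul_def]
  ext i j
  rw [Algebra.leftMulMatrix_eq_repr_mul, key]
  fin_cases j <;> fin_cases i <;> simp [companionMatrix]

theorem leftMulMatrix_aeval (hθ : θ ^ 5 = 2) (hK : Module.finrank ℚ K = 5) (p : ℤ[X]) :
    Algebra.leftMulMatrix (fifthRootBasis hθ hK) ((aeval θ p : 𝓞 K) : K) =
      (Int.castRingHom ℚ).mapMatrix (aeval companionMatrix p) := by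
  have h1 : ((aeval θ p : 𝓞 K) : K) = aeval (θ : K) p := (aeval_algebraMap_apply K θ p).symm
  rw [h1]
  have h2 := aeval_algHom_apply
    ((Algebra.leftMulMatrix (fifthRootBasis hθ hK)).toRingHom.toIntAlgHom) (θ : K) p
  have h3 := aeval_algHom_apply ((Int.castRingHom ℚ).mapMatrix.toIntAlgHom) companionMatrix p
  have h4 := leftMulMatrix_fifthRootBasis hθ hK
  simp only [RingHom.toIntAlgHom_apply] at h2 h3
  rw [← h3, ← h4]
  exact h2.symm

theorem norm_aeval (hθ : θ ^ 5 = 2) (hK : Module.finrank ℚ K = 5) (p : ℤ[X]) :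
    Algebra.norm ℤ (aeval θ p) = (aeval companionMatrix p).det := by
  have h : ((Algebra.norm ℤ (aeval θ p) : ℤ) : ℚ) = ((aeval companionMatrix p).det : ℤ) := by
    rw [Algebra.coe_norm_int, Algebra.norm_eq_matrix_det (fifthRootBasis hθ hK),
      leftMulMatrix_aeval, ← RingHom.map_det]
    simp
  exact_mod_cast h

theorem trace_pow (hθ : θ ^ 5 = 2) (hK : Module.finrank ℚ K = 5) (n : ℕ) :
    Algebra.trace ℚ K ((θ : K) ^ n) = ((companionMatrix ^ n).trace : ℤ) := by
  have := leftMulMatrix_aeval hθ hK (X ^ n)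
  rw [map_pow, map_pow, aeval_X, aeval_X] at this
  rw [Algebra.trace_eq_matrix_trace (fifthRootBasis hθ hK)]
  have h : ((θ ^ n : 𝓞 K) : K) = (θ : K) ^ n := map_pow _ _ _
  rw [← h, this]
  simp [Matrix.trace]

theorem discr_fifthRootBasis (hθ : θ ^ 5 = 2) (hK : Module.finrank ℚ K = 5) :
    Algebra.discr ℚ (fifthRootBasis hθ hK) = 50000 := by
  have h : Algebra.traceMatrix ℚ (fifthRootBasis hθ hK) = (Int.castRingHom ℚ).mapMatrix
      (Matrix.of fun i j : Fin 5 => (companionMatrix ^ ((i : ℕ) + (j : ℕ))).trace) := by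
    ext i j
    rw [Algebra.traceMatrix_apply, Algebra.traceForm_apply, fifthRootBasis_apply,
      fifthRootBasis_apply, ← pow_add, trace_pow hθ hK]
    simp
  rw [Algebra.discr_def, h, ← RingHom.map_det]
  have : (Matrix.of fun i j : Fin 5 => (companionMatrix ^ ((i : ℕ) + (j : ℕ))).trace).det
      = 50000 := by decide +kernel
  rw [this]; simp

theorem abs_discr_le (hθ : θ ^ 5 = 2) (hK : Module.finrank ℚ K = 5) :
    |discr K| ≤ 50000 := by
  have e : Module.Free.ChooseBasisIndex ℤ (𝓞 K) ≃ Fin 5 := by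
    refine Fintype.equivFinOfCardEq ?_
    rw [← Module.finrank_eq_card_chooseBasisIndex, RingOfIntegers.rank, hK]
  set B := (RingOfIntegers.basis K).reindex e with hB
  let P : Matrix (Fin 5) (Fin 5) ℤ := Matrix.of fun i j => B.repr (θ ^ (j : ℕ)) i
  set w : Fin 5 → K := fun i => ((B i : 𝓞 K) : K) with hw
  have hdw : Algebra.discr ℚ w = discr K := by
    have : w = integralBasis K ∘ e.symm := by
      ext i
      simp [hw, hB, integralBasis_apply]
    rw [coe_discr, this, Algebra.discr_reindex]
  have hv : (fifthRootBasis hθ hK : Fin 5 → K) =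
      Matrix.vecMul w ((P.map (Int.castRingHom ℚ)).map (algebraMap ℚ K)) := by
    ext j
    rw [fifthRootBasis_apply, Matrix.vecMul, dotProduct]
    have h := congrArg (algebraMap (𝓞 K) K) (B.sum_repr (θ ^ (j : ℕ)))
    rw [map_sum] at h
    rw [← map_pow, ← h]
    refine Finset.sum_congr rfl fun i _ => ?_
    simp [hw, P, mul_comm]
  have hd := Algebra.discr_of_matrix_vecMul (A := ℚ) w (P.map (Int.castRingHom ℚ))
  rw [← hv, discr_fifthRootBasis, hdw] at hd
  have hdet : (P.map (Int.castRingHom ℚ)).det = (P.det : ℚ) := by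
    rw [← RingHom.mapMatrix_apply, ← RingHom.map_det]; simp
  rw [hdet] at hd
  have hd' : (50000 : ℤ) = P.det ^ 2 * discr K := by exact_mod_cast hd
  have hP : P.det ≠ 0 := by
    intro h; rw [h] at hd'; norm_num at hd'
  have h1 : 0 < P.det ^ 2 := by positivity
  have h2 : |P.det ^ 2 * discr K| = 50000 := by rw [← hd']; norm_num
  rw [abs_mul, abs_of_nonneg (sq_nonneg _)] at h2
  nlinarith [abs_nonneg (discr K)]

theorem nrComplexPlaces_eq_two (hθ : θ ^ 5 = 2) (hK : Module.finrank ℚ K = 5) :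
    InfinitePlace.nrComplexPlaces K = 2 ∧ InfinitePlace.nrRealPlaces K = 1 := by
  have h1 := InfinitePlace.card_add_two_mul_card_eq_rank K
  have h3 : InfinitePlace.nrRealPlaces K ≤ 1 := by
    classical
    rw [← InfinitePlace.card_real_embeddings, Fintype.card_le_one_iff_subsingleton]
    refine ⟨fun φ ψ => Subtype.ext ?_⟩
    have key : ∀ φ : {φ : K →+* ℂ // ComplexEmbedding.IsReal φ},
        ∃ r : ℝ, φ.1 (θ : K) = r ∧ r ^ 5 = 2 := by
      intro φ
      obtain ⟨r, hr⟩ := Complex.conj_eq_iff_real.mp (RingHom.congr_fun φ.2 (θ : K))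
      refine ⟨r, hr, ?_⟩
      have := congrArg φ.1 (coe_pow_five hθ)
      rw [map_pow, hr, map_ofNat] at this
      exact_mod_cast this
    obtain ⟨r, hr, hr2⟩ := key φ
    obtain ⟨t, ht, ht2⟩ := key ψ
    have hrt : r = t := by
      have : StrictMono fun x : ℝ => x ^ 5 := Odd.strictMono_pow (by decide)
      exact this.injective (by simp [hr2, ht2])
    have hφψ : φ.1.toRatAlgHom (θ : K) = ψ.1.toRatAlgHom (θ : K) := by
      simp [hr, ht, hrt]
    have : φ.1.toRatAlgHom.toLinearMap = ψ.1.toRatAlgHom.toLinearMap := by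
      refine (fifthRootBasis hθ hK).ext fun i => ?_
      rw [fifthRootBasis_apply]
      simp only [AlgHom.toLinearMap_apply, map_pow, hφψ]
    ext x
    exact LinearMap.congr_fun this x
  have h2 := InfinitePlace.nrRealPlaces_pos_of_odd_finrank (K := K) (by rw [hK]; decide)
  rw [hK] at h1
  omega

theorem minkowski_bound_lt (hθ : θ ^ 5 = 2) (hK : Module.finrank ℚ K = 5) :
    (4 / Real.pi) ^ InfinitePlace.nrComplexPlaces K *
      ((Module.finrank ℚ K).factorial / (Module.finrank ℚ K : ℝ) ^ (Module.finrank ℚ K) *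
        √|(discr K : ℝ)|) < 14 := by
  rw [(nrComplexPlaces_eq_two hθ hK).1, hK]
  have hd : √|(discr K : ℝ)| ≤ 223.7 := by
    rw [Real.sqrt_le_left (by norm_num)]
    have : |(discr K : ℝ)| ≤ 50000 := by exact_mod_cast abs_discr_le hθ hK
    norm_num at this ⊢; linarith
  have hπ : (4 / Real.pi) ^ 2 ≤ (4 / 3.14) ^ 2 := by
    have := Real.pi_gt_d2
    gcongr
  have h5 : ((Nat.factorial 5 : ℕ) : ℝ) / ((5 : ℕ) : ℝ) ^ 5 = 120 / 3125 := by
    norm_num [Nat.factorial]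
  rw [h5]
  calc _ ≤ (4 / 3.14 : ℝ) ^ 2 * (120 / 3125 * 223.7) := by gcongr
    _ < 14 := by norm_num

theorem eq_span_singleton_of_mem (P : Ideal (𝓞 K)) [P.IsPrime] {g : 𝓞 K} (hg : g ∈ P)
    (h : (Algebra.norm ℤ g).natAbs.Prime) : P = Ideal.span {g} := by
  have hn : (Ideal.absNorm (Ideal.span {g})).Prime := by
    rwa [Ideal.absNorm_span_singleton]
  have hp : (Ideal.span {g}).IsPrime := Ideal.isPrime_of_irreducible_absNorm hn
  have hne : Ideal.span {g} ≠ ⊥ := by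
    intro h0
    rw [h0, Ideal.absNorm_bot] at hn
    exact Nat.not_prime_zero hn
  have hm := hp.isMaximal hne
  exact (hm.eq_of_le (Ideal.IsPrime.ne_top ‹_›)
    ((Ideal.span_singleton_le_iff_mem _).mpr hg)).symm

theorem prime_of_norm {g : 𝓞 K} (h : (Algebra.norm ℤ g).natAbs.Prime) : Prime g := by
  have hn : (Ideal.absNorm (Ideal.span {g})).Prime := by
    rwa [Ideal.absNorm_span_singleton]
  have hp : (Ideal.span {g}).IsPrime := Ideal.isPrime_of_irreducible_absNorm hn
  refine (Ideal.span_singleton_prime ?_).mp hp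
  rintro rfl
  simp [Nat.not_prime_zero] at h

theorem norm_generators (hθ : θ ^ 5 = 2) (hK : Module.finrank ℚ K = 5) :
    Algebra.norm ℤ θ = 2 ∧ Algebra.norm ℤ (1 + θ) = 3 ∧ Algebra.norm ℤ (1 + θ ^ 2) = 5 ∧
    Algebra.norm ℤ (1 + θ + θ ^ 2) = 7 ∧ Algebra.norm ℤ (1 + θ ^ 3 - θ ^ 4) = 13 := by
  refine ⟨?_, ?_, ?_, ?_, ?_⟩
  · have := norm_aeval hθ hK X
    simp only [aeval_X] at this
    rw [this]; decide +kernel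
  · have := norm_aeval hθ hK (1 + X)
    simp only [map_add, map_one, aeval_X] at this
    have hm : 1 + companionMatrix = !![1, 0, 0, 0, 2; 1, 1, 0, 0, 0; 0, 1, 1, 0, 0; 0, 0, 1, 1, 0; 0, 0, 0, 1, 1] := by
      decide +kernel
    rw [this, hm]; decide +kernel
  · have := norm_aeval hθ hK (1 + X ^ 2)
    simp only [map_add, map_one, map_pow, aeval_X] at this
    have hm : 1 + companionMatrix ^ 2 = !![1, 0, 0, 2, 0; 0, 1, 0, 0, 2; 1, 0, 1, 0, 0; 0, 1, 0, 1, 0; 0, 0, 1, 0, 1] := by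
      decide +kernel
    rw [this, hm]; decide +kernel
  · have := norm_aeval hθ hK (1 + X + X ^ 2)
    simp only [map_add, map_one, map_pow, aeval_X] at this
    have hm : 1 + companionMatrix + companionMatrix ^ 2 = !![1, 0, 0, 2, 2; 1, 1, 0, 0, 2; 1, 1, 1, 0, 0; 0, 1, 1, 1, 0; 0, 0, 1, 1, 1] := by
      decide +kernel
    rw [this, hm]; decide +kernel
  · have := norm_aeval hθ hK (1 + X ^ 3 - X ^ 4)
    simp only [map_add, map_sub, map_one, map_pow, aeval_X] at this
    have hm : 1 + companionMatrix ^ 3 - companionMatrix ^ 4 = !![1, -2, 2, 0, 0; 0, 1, -2, 2, 0; 0, 0, 1, -2, 2; 1, 0, 0, 1, -2; -1, 1, 0, 0, 1] := by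
      decide +kernel
    rw [this, hm]; decide +kernel

theorem fifth_root_in_small_field {F : Type*} [Field F] [Fintype F] {β : F} (hβ : β ^ 5 = 2)
    (hF : Fintype.card F < 14) :
    β = 0 ∨ 1 + β = 0 ∨ 1 + β ^ 2 = 0 ∨ 1 + β + β ^ 2 = 0 ∨ 1 + β ^ 3 - β ^ 4 = 0 := by
  have hq := FiniteField.pow_card β
  have h0 : (Fintype.card F : F) = 0 := FiniteField.cast_card_eq_zero F
  have h1 : 1 < Fintype.card F := Fintype.one_lt_card
  by_cases hb : β = 0
  · exact Or.inl hb
  generalize Fintype.card F = q at *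
  have hc : ∀ n : ℕ, β ^ (n + 1) = β → β ^ n = 1 := fun n hn => by
    rw [pow_succ] at hn
    exact mul_right_cancel₀ hb (hn.trans (one_mul β).symm)
  have h2 : (2 : F) ≠ 0 := fun h => hb (pow_eq_zero_iff (by norm_num) |>.mp (hβ.trans h))
  by_cases h7 : q = 7
  · subst h7
    have e1 : 2 * β = 1 := by linear_combination hc 6 hq - β * hβ
    push_cast at h0
    refine Or.inr (Or.inr (Or.inr (Or.inl ?_)))
    have e2 : β = 4 := by linear_combination 4 * e1 - β * h0
    rw [e2]
    linear_combination 3 * h0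
  by_cases h13 : q = 13
  · subst h13
    have e1 : 4 * β ^ 2 = 1 := by linear_combination hc 12 hq - (β ^ 7 + 2 * β ^ 2) * hβ
    push_cast at h0
    refine Or.inr (Or.inr (Or.inr (Or.inr ?_)))
    have e2 : β = 6 := by
      linear_combination 16 * hβ - β * (4 * β ^ 2 + 1) * e1 + 2 * h0
    rw [e2]
    linear_combination (-83) * h0
  interval_cases q
  all_goals push_cast at h0
  · exact absurd h0 h2
  · have e1 : β ^ 2 = 1 := hc 2 hq
    refine Or.inr (Or.inl ?_)
    linear_combination hβ - β * (β ^ 2 + 1) * e1 + h0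
  · exact absurd (pow_eq_zero_iff (n := 2) two_ne_zero |>.mp (by linear_combination h0)) h2
  · have e1 : β ^ 4 = 1 := hc 4 hq
    have e2 : β = 2 := by linear_combination hβ - β * e1
    refine Or.inr (Or.inr (Or.inl ?_))
    rw [e2]
    linear_combination h0
  · have e1 : 2 = (1 : F) := by linear_combination hc 5 hq - hβ
    exact absurd (by linear_combination 2 * e1) h2
  · exact absurd rfl h7
  · exact absurd (pow_eq_zero_iff (n := 3) three_ne_zero |>.mp (by linear_combination h0)) h2
  · have h3 : (3 : F) = 0 :=
      pow_eq_zero_iff (n := 2) two_ne_zero |>.mp (by linear_combination h0)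
    have e1 : β ^ 3 = -1 := by linear_combination β ^ 3 * h3 - hc 8 hq + β ^ 3 * hβ
    have e2 : β ^ 2 = 1 := by linear_combination -hβ + β ^ 2 * e1 - h3
    refine Or.inr (Or.inl ?_)
    linear_combination e1 - β * e2
  · have h5 : (5 : F) = 0 := (mul_eq_zero.mp (by linear_combination h0)).resolve_left h2
    have e1 : β = 4 := by linear_combination 2 * hβ - β * hc 9 hq + β ^ 5 * hβ
    rw [e1] at hβ
    exact absurd (by linear_combination hβ - 204 * h5) h2
  · have e1 : 4 = (1 : F) := by linear_combination hc 10 hq - (β ^ 5 + 2) * hβ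
    exact absurd (by linear_combination h0 - 3 * e1) h2
  · have h3 : (3 : F) = 0 := (mul_eq_zero.mp
      (show (2 ^ 2 : F) * 3 = 0 by linear_combination h0)).resolve_left (pow_ne_zero 2 h2)
    have e1 : β = 1 := by linear_combination hc 11 hq - (β ^ 6 + 2 * β) * hβ - β * h3
    rw [e1] at hβ
    exact absurd (by linear_combination -2 * hβ) h2
  · exact absurd rfl h13

theorem isPrincipalIdealRing_of_pow_five_eq_two (hθ : θ ^ 5 = 2)
    (hK : Module.finrank ℚ K = 5) : IsPrincipalIdealRing (𝓞 K) := by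
  refine RingOfIntegers.isPrincipalIdealRing_of_isPrincipal_of_norm_le_of_isPrime ?_
  intro I hI hn
  have hlt : Ideal.absNorm (I : Ideal (𝓞 K)) < 14 := by
    have := hn.trans_lt (minkowski_bound_lt hθ hK)
    exact_mod_cast this
  have hne : (I : Ideal (𝓞 K)) ≠ ⊥ := nonZeroDivisors.coe_ne_zero I
  have hmax := hI.isMaximal hne
  let _ : Field (𝓞 K ⧸ (I : Ideal (𝓞 K))) := Ideal.Quotient.field _
  have : Finite (𝓞 K ⧸ (I : Ideal (𝓞 K))) := Ideal.finiteQuotientOfFreeOfNeBot _ hne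
  let _ := Fintype.ofFinite (𝓞 K ⧸ (I : Ideal (𝓞 K)))
  have hcard : Fintype.card (𝓞 K ⧸ (I : Ideal (𝓞 K))) = Ideal.absNorm (I : Ideal (𝓞 K)) := by
    rw [Ideal.absNorm_apply, Submodule.cardQuot_apply, Nat.card_eq_fintype_card]
  obtain ⟨n2, n3, n5, n7, n13⟩ := norm_generators hθ hK
  have hβ : (Ideal.Quotient.mk (I : Ideal (𝓞 K)) θ) ^ 5 = 2 := by
    rw [← map_pow, hθ, map_ofNat]
  have key : ∀ g : 𝓞 K, g ∈ (I : Ideal (𝓞 K)) → (Algebra.norm ℤ g).natAbs.Prime →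
      Submodule.IsPrincipal (I : Ideal (𝓞 K)) := fun g hg hp =>
    ⟨g, eq_span_singleton_of_mem _ hg hp⟩
  rcases fifth_root_in_small_field hβ (hcard ▸ hlt) with h | h | h | h | h
  · exact key θ (Ideal.Quotient.eq_zero_iff_mem.mp h) (by rw [n2]; norm_num)
  · exact key (1 + θ) (Ideal.Quotient.eq_zero_iff_mem.mp (by simpa using h))
      (by rw [n3]; norm_num)
  · exact key (1 + θ ^ 2) (Ideal.Quotient.eq_zero_iff_mem.mp (by simpa using h))
      (by rw [n5]; norm_num)
  · exact key (1 + θ + θ ^ 2) (Ideal.Quotient.eq_zero_iff_mem.mp (by simpa using h))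
      (by rw [n7]; norm_num)
  · exact key (1 + θ ^ 3 - θ ^ 4) (Ideal.Quotient.eq_zero_iff_mem.mp (by simpa using h))
      (by rw [n13]; norm_num)

end NumberFieldFacts

/-- Coordinates of an element of `ℤ[θ]`, `θ ^ 5 = 2`, with respect to `1, θ, …, θ ^ 4`. -/
@[ext]
structure Quint where
  /-- coefficient of `1` -/
  c0 : ℤ
  /-- coefficient of `θ` -/
  c1 : ℤ
  /-- coefficient of `θ ^ 2` -/
  c2 : ℤ
  /-- coefficient of `θ ^ 3` -/
  c3 : ℤ
  /-- coefficient of `θ ^ 4` -/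
  c4 : ℤ

namespace Quint

/-- Multiplication in `ℤ[θ]`. -/
def mul (x y : Quint) : Quint where
  c0 := x.c0 * y.c0 + 2 * (x.c1 * y.c4 + x.c2 * y.c3 + x.c3 * y.c2 + x.c4 * y.c1)
  c1 := x.c0 * y.c1 + x.c1 * y.c0 + 2 * (x.c2 * y.c4 + x.c3 * y.c3 + x.c4 * y.c2)
  c2 := x.c0 * y.c2 + x.c1 * y.c1 + x.c2 * y.c0 + 2 * (x.c3 * y.c4 + x.c4 * y.c3)
  c3 := x.c0 * y.c3 + x.c1 * y.c2 + x.c2 * y.c1 + x.c3 * y.c0 + 2 * (x.c4 * y.c4)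
  c4 := x.c0 * y.c4 + x.c1 * y.c3 + x.c2 * y.c2 + x.c3 * y.c1 + x.c4 * y.c0

/-- Subtraction in `ℤ[θ]`. -/
def sub (x y : Quint) : Quint :=
  ⟨x.c0 - y.c0, x.c1 - y.c1, x.c2 - y.c2, x.c3 - y.c3, x.c4 - y.c4⟩

/-- The element `1`. -/
def one : Quint := ⟨1, 0, 0, 0, 0⟩

/-- `x ^ i` for `i ∈ {0, 1}`. -/
def bpow (x : Quint) (i : Fin 2) : Quint := if i = 0 then one else x

/-- Divisibility by `θ ^ 11`. -/
def Small (x : Quint) : Prop := 8 ∣ x.c0 ∧ 4 ∣ x.c1 ∧ 4 ∣ x.c2 ∧ 4 ∣ x.c3 ∧ 4 ∣ x.c4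

instance : DecidablePred Small := fun x => by unfold Small; infer_instance

/-- `(-1) ^ i * (θ - 1) ^ j * (θ ^ 3 + θ ^ 2 - 1) ^ k`. -/
def unit (i j k : Fin 2) : Quint :=
  mul (mul (bpow ⟨-1, 0, 0, 0, 0⟩ i) (bpow ⟨-1, 1, 0, 0, 0⟩ j)) (bpow ⟨-1, 0, 1, 1, 0⟩ k)

/-- `unit i j k * δ ^ l * (1 + θ ^ 2) ^ m`, with `δ = 1 - θ + θ ^ 2 - θ ^ 3 + θ ^ 4`. -/
def sUnit (i j k l m : Fin 2) : Quint :=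
  mul (mul (unit i j k) (bpow ⟨1, -1, 1, -1, 1⟩ l)) (bpow ⟨1, 0, 1, 0, 0⟩ m)

/-- Representatives of `1 + θ O` modulo `θ ^ 6`. -/
def hat (a b c d e : Fin 2) : Quint := ⟨1 + 2 * e, a, b, c, d⟩

/-- The element of a ring with given coordinates. -/
def ev {R : Type*} [CommRing R] (θ : R) (x : Quint) : R :=
  x.c0 + x.c1 * θ + x.c2 * θ ^ 2 + x.c3 * θ ^ 3 + x.c4 * θ ^ 4

section ev
variable {R : Type*} [CommRing R] {θ : R}

theorem ev_mul (h : θ ^ 5 = 2) (x y : Quint) : ev θ (mul x y) = ev θ x * ev θ y := by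
  simp only [ev, mul]
  push_cast
  linear_combination (-(x.c1 * y.c4 + x.c2 * y.c3 + x.c3 * y.c2 + x.c4 * y.c1 : R) -
    (x.c2 * y.c4 + x.c3 * y.c3 + x.c4 * y.c2) * θ - (x.c3 * y.c4 + x.c4 * y.c3) * θ ^ 2 -
    x.c4 * y.c4 * θ ^ 3) * h

theorem ev_sub (x y : Quint) : ev θ (sub x y) = ev θ x - ev θ y := by
  simp only [ev, sub]
  push_cast
  ring

theorem ev_one : ev θ one = 1 := by simp [ev, one]

theorem ev_bpow (x : Quint) (i : Fin 2) : ev θ (bpow x i) = ev θ x ^ (i : ℕ) := by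
  fin_cases i <;> simp [bpow, ev_one]

theorem ev_unit (h : θ ^ 5 = 2) (i j k : Fin 2) :
    ev θ (unit i j k) = (-1) ^ (i : ℕ) * (θ - 1) ^ (j : ℕ) * (θ ^ 3 + θ ^ 2 - 1) ^ (k : ℕ) := by
  simp only [unit, ev_mul h, ev_bpow]
  congr 2
  · simp [ev]
  · congr 1
    simp [ev]; ring
  · simp [ev]; ring

theorem ev_sUnit (h : θ ^ 5 = 2) (i j k l m : Fin 2) :
    ev θ (sUnit i j k l m) = ev θ (unit i j k) * (1 - θ + θ ^ 2 - θ ^ 3 + θ ^ 4) ^ (l : ℕ) *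
      (1 + θ ^ 2) ^ (m : ℕ) := by
  simp only [sUnit, ev_mul h, ev_bpow]
  congr 2
  · congr 1
    simp [ev]; ring
  · simp [ev]

theorem dvd_int (hp : Prime θ) (h : θ ^ 5 = 2) {c : ℤ} (hc : θ ∣ (c : R)) :
    ∃ d : ℤ, c = 2 * d := by
  rcases Int.even_or_odd' c with ⟨d, rfl | rfl⟩
  · exact ⟨d, rfl⟩
  · exfalso
    apply hp.not_isUnit
    rw [isUnit_iff_dvd_one]
    have h2 : θ ∣ (2 : R) := ⟨θ ^ 4, by rw [← h]; ring⟩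
    have : (1 : R) = ((2 * d + 1 : ℤ) : R) - 2 * d := by push_cast; ring
    rw [this]
    exact dvd_sub hc (h2.mul_right _)

theorem dvd_shift [IsDomain R] (hp : Prime θ) (h : θ ^ 5 = 2) {x : Quint} {n : ℕ}
    (hx : θ ^ (n + 1) ∣ ev θ x) :
    ∃ d : ℤ, x.c0 = 2 * d ∧ θ ^ n ∣ ev θ ⟨x.c1, x.c2, x.c3, x.c4, d⟩ := by
  have h1 : θ ∣ (x.c0 : R) := by
    have : (x.c0 : R) = ev θ x - θ * (x.c1 + x.c2 * θ + x.c3 * θ ^ 2 + x.c4 * θ ^ 3) := by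
      simp only [ev]; ring
    rw [this]
    exact dvd_sub ((dvd_pow_self θ n.succ_ne_zero).trans hx) (dvd_mul_right _ _)
  obtain ⟨d, hd⟩ := dvd_int hp h h1
  refine ⟨d, hd, ?_⟩
  have : ev θ x = θ * ev θ ⟨x.c1, x.c2, x.c3, x.c4, d⟩ := by
    simp only [ev, hd]; push_cast
    linear_combination -(d : R) * h
  rw [this, pow_succ'] at hx
  exact (mul_dvd_mul_iff_left hp.ne_zero).mp hx

theorem small_of_dvd [IsDomain R] (hp : Prime θ) (h : θ ^ 5 = 2) {x : Quint}
    (hx : θ ^ 11 ∣ ev θ x) : Small x := by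
  obtain ⟨a0, h0, hx⟩ := dvd_shift hp h hx
  obtain ⟨a1, h1, hx⟩ := dvd_shift hp h hx
  obtain ⟨a2, h2, hx⟩ := dvd_shift hp h hx
  obtain ⟨a3, h3, hx⟩ := dvd_shift hp h hx
  obtain ⟨a4, h4, hx⟩ := dvd_shift hp h hx
  obtain ⟨b0, k0, hx⟩ := dvd_shift hp h hx
  obtain ⟨b1, k1, hx⟩ := dvd_shift hp h hx
  obtain ⟨b2, k2, hx⟩ := dvd_shift hp h hx
  obtain ⟨b3, k3, hx⟩ := dvd_shift hp h hx
  obtain ⟨b4, k4, hx⟩ := dvd_shift hp h hx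
  obtain ⟨c0, l0, hx⟩ := dvd_shift hp h hx
  simp only at *
  refine ⟨?_, ?_, ?_, ?_, ?_⟩ <;> omega

end ev
end Quint

section digits
variable {O : Type*} [CommRing O] {θ : O}

theorem exists_digit (hres : ∀ x, θ ∣ x ∨ θ ∣ x - 1) (x : O) :
    ∃ (a : Fin 2) (y : O), x = ((a : ℕ) : ℤ) + θ * y := by
  rcases hres x with ⟨y, hy⟩ | ⟨y, hy⟩
  · exact ⟨0, y, by simp [hy]⟩
  · exact ⟨1, y, by simp [← hy]⟩

theorem exists_hat (h5 : θ ^ 5 = 2) (hres : ∀ x, θ ∣ x ∨ θ ∣ x - 1) {x : O}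
    (hx : θ ∣ x - 1) :
    ∃ a b c d e : Fin 2, θ ^ 11 ∣ x ^ 2 - Quint.ev θ (Quint.hat a b c d e) ^ 2 := by
  obtain ⟨x1, hx1⟩ := hx
  obtain ⟨a, x2, hx2⟩ := exists_digit hres x1
  obtain ⟨b, x3, hx3⟩ := exists_digit hres x2
  obtain ⟨c, x4, hx4⟩ := exists_digit hres x3
  obtain ⟨d, x5, hx5⟩ := exists_digit hres x4
  obtain ⟨e, y, hy⟩ := exists_digit hres x5
  refine ⟨a, b, c, d, e, ?_⟩
  set s := Quint.ev θ (Quint.hat a b c d e) with hs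
  have key : x = s + θ ^ 6 * y := by
    have : x = 1 + θ * x1 := by rw [← hx1]; ring
    rw [this, hx2, hx3, hx4, hx5, hy, hs]
    simp only [Quint.ev, Quint.hat]
    push_cast
    linear_combination (e : O) * h5
  refine ⟨s * y + θ * y ^ 2, ?_⟩
  rw [key]
  linear_combination -(θ ^ 6 * s * y) * h5

end digits

namespace Quint

theorem units_independent : ∀ i j k i' j' k' a b c d e : Fin 2,
    Small (sub (unit i j k) (mul (unit i' j' k') (mul (hat a b c d e) (hat a b c d e)))) →
      i = i' ∧ j = j' ∧ k = k' := by decide +kernel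

theorem sUnits_independent : ∀ i j k l m a b c d e : Fin 2,
    Small (sub one (mul (sUnit i j k l m) (mul (hat a b c d e) (hat a b c d e)))) →
      i = 0 ∧ j = 0 ∧ k = 0 ∧ l = 0 ∧ m = 0 := by decide +kernel

end Quint

theorem isUnit_ev_unit {O : Type*} [CommRing O] {θ : O} (h5 : θ ^ 5 = 2) (i j k : Fin 2) :
    IsUnit (Quint.ev θ (Quint.unit i j k)) := by
  rw [Quint.ev_unit h5]
  refine ((isUnit_one.neg.pow _).mul (IsUnit.pow _ ?_)).mul (IsUnit.pow _ ?_)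
  · exact IsUnit.of_mul_eq_one (1 + θ + θ ^ 2 + θ ^ 3 + θ ^ 4) (by linear_combination h5)
  · exact IsUnit.of_mul_eq_one (-1 + θ ^ 2 - θ ^ 3 + θ ^ 4)
      (by linear_combination (θ ^ 2) * h5)

theorem unit_class_injective {O : Type*} [CommRing O] [IsDomain O] {θ : O} (h5 : θ ^ 5 = 2)
    (hp : Prime θ) (hres : ∀ x, θ ∣ x ∨ θ ∣ x - 1) {i j k i' j' k' : Fin 2} {v : O}
    (hv : IsUnit v)
    (h : Quint.ev θ (Quint.unit i j k) = Quint.ev θ (Quint.unit i' j' k') * v ^ 2) :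
    i = i' ∧ j = j' ∧ k = k' := by
  have hv1 : θ ∣ v - 1 := (hres v).resolve_left fun hd => hp.not_isUnit (isUnit_of_dvd_unit hd hv)
  obtain ⟨a, b, c, d, e, hd⟩ := exists_hat h5 hres hv1
  refine Quint.units_independent i j k i' j' k' a b c d e (Quint.small_of_dvd hp h5 ?_)
  rw [Quint.ev_sub, h, Quint.ev_mul h5, Quint.ev_mul h5, ← mul_sub, ← pow_two]
  exact hd.mul_left _

section NumberFieldUnits
variable {K : Type*} [Field K] [NumberField K] {θ : 𝓞 K}

theorem prime_fifth_root (hθ : θ ^ 5 = 2) (hK : Module.finrank ℚ K = 5) : Prime θ :=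
  prime_of_norm (by rw [(norm_generators hθ hK).1]; norm_num)

theorem residue_fifth_root (hθ : θ ^ 5 = 2) (hK : Module.finrank ℚ K = 5) (x : 𝓞 K) :
    θ ∣ x ∨ θ ∣ x - 1 := by
  have hc : Nat.card (𝓞 K ⧸ Ideal.span {θ}) = 2 := by
    rw [← Submodule.cardQuot_apply, ← Ideal.absNorm_apply, Ideal.absNorm_span_singleton,
      (norm_generators hθ hK).1]
    rfl
  have : Finite (𝓞 K ⧸ Ideal.span {θ}) := Nat.finite_of_card_ne_zero (by omega)
  have hne : (0 : 𝓞 K ⧸ Ideal.span {θ}) ≠ 1 := by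
    intro h
    have := (Nat.card_eq_one_iff_unique (α := 𝓞 K ⧸ Ideal.span {θ})).mpr
      ⟨subsingleton_of_zero_eq_one h, ⟨0⟩⟩
    omega
  have huniv : ({0, 1} : Set (𝓞 K ⧸ Ideal.span {θ})) = Set.univ := by
    apply Set.eq_of_subset_of_ncard_le (Set.subset_univ _)
    rw [Set.ncard_univ, hc, Set.ncard_pair hne]
  have hx : Ideal.Quotient.mk (Ideal.span {θ}) x ∈ ({0, 1} : Set (𝓞 K ⧸ Ideal.span {θ})) :=
    huniv ▸ Set.mem_univ _
  rcases hx with hx | hx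
  · left
    rwa [Ideal.Quotient.eq_zero_iff_dvd] at hx
  · right
    have : Ideal.Quotient.mk (Ideal.span {θ}) (x - 1) = 0 := by
      rw [map_sub, map_one, sub_eq_zero]; exact hx
    rwa [Ideal.Quotient.eq_zero_iff_dvd] at this

theorem units_mod_squares (hθ : θ ^ 5 = 2) (hK : Module.finrank ℚ K = 5) (u : (𝓞 K)ˣ) :
    ∃ (i j k : Fin 2) (v : 𝓞 K), (u : 𝓞 K) = Quint.ev θ (Quint.unit i j k) * v ^ 2 := by
  classical
  have hodd : Odd (Module.finrank ℚ K) := by rw [hK]; decide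
  have hrank : Units.rank K = 2 := by
    have h := nrComplexPlaces_eq_two hθ hK
    rw [Units.rank, InfinitePlace.card_eq_nrRealPlaces_add_nrComplexPlaces, h.1, h.2]
  have hdec : ∀ x : (𝓞 K)ˣ, ∃ (i : Fin 2) (f : Fin (Units.rank K) → Fin 2) (v : (𝓞 K)ˣ),
      x = (-1) ^ (i : ℕ) * (∏ t, Units.fundSystem K t ^ (f t : ℕ)) * v ^ 2 := by
    intro x
    obtain ⟨⟨ζ, n⟩, hx, -⟩ := Units.exist_unique_eq_mul_prod K x
    have hζ := Units.torsion_eq_one_or_neg_one_of_odd_finrank hodd ζ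
    have hn : ∀ t, ∃ (a : Fin 2) (m : ℤ), n t = ((a : ℕ) : ℤ) + 2 * m := by
      intro t
      rcases Int.even_or_odd' (n t) with ⟨m, hm | hm⟩
      · exact ⟨0, m, by simp [hm]⟩
      · exact ⟨1, m, by simp [hm]; ring⟩
    choose f m hf using hn
    have hprod : ∏ t, Units.fundSystem K t ^ (n t) =
        (∏ t, Units.fundSystem K t ^ (f t : ℕ)) * (∏ t, Units.fundSystem K t ^ (m t)) ^ 2 := by
      rw [← Finset.prod_pow, ← Finset.prod_mul_distrib]
      refine Finset.prod_congr rfl fun t _ => ?_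
      rw [hf, zpow_add, zpow_natCast, mul_comm (2 : ℤ), zpow_mul]
      rfl
    rcases hζ with h | h
    · exact ⟨0, f, ∏ t, Units.fundSystem K t ^ (m t), by simp [hx, h, hprod]⟩
    · exact ⟨1, f, ∏ t, Units.fundSystem K t ^ (m t), by simp [hx, h, hprod]⟩
  choose I F V hIF using hdec
  let E : Fin 2 × Fin 2 × Fin 2 → (𝓞 K)ˣ := fun c => (isUnit_ev_unit hθ c.1 c.2.1 c.2.2).unit
  let Φ : (𝓞 K)ˣ → Fin 2 × (Fin (Units.rank K) → Fin 2) := fun x => (I x, F x)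
  have hΦ : ∀ x y, Φ x = Φ y → ∃ v : (𝓞 K)ˣ, x = y * v ^ 2 := by
    intro x y hxy
    have h1 : I x = I y := congrArg Prod.fst hxy
    have h2 : F x = F y := congrArg Prod.snd hxy
    refine ⟨V x * (V y)⁻¹, ?_⟩
    have hx := hIF x
    have hy := hIF y
    rw [h1, h2] at hx
    rw [mul_pow]
    calc x = _ := hx
      _ = (y * (V y ^ 2)⁻¹) * V x ^ 2 := by
        congr 1
        rw [eq_mul_inv_iff_mul_eq]
        exact hy.symm
      _ = _ := by rw [inv_pow]; exact mul_right_comm _ _ _ |>.trans (mul_assoc _ _ _)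
  have hinj : Function.Injective (Φ ∘ E) := by
    rintro ⟨i, j, k⟩ ⟨i', j', k'⟩ h
    obtain ⟨v, hv⟩ := hΦ _ _ h
    have hv' := congrArg (Units.val) hv
    obtain ⟨rfl, rfl, rfl⟩ := unit_class_injective hθ (prime_fifth_root hθ hK)
      (residue_fifth_root hθ hK) v.isUnit (i := i) (j := j) (k := k) (i' := i') (j' := j')
      (k' := k') (by simpa [E] using hv')
    rfl
  have hsurj : Function.Surjective (Φ ∘ E) :=
    ((Fintype.bijective_iff_injective_and_card _).mpr ⟨hinj, by simp [hrank]⟩).2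
  obtain ⟨⟨i, j, k⟩, hc⟩ := hsurj (Φ u)
  obtain ⟨v, hv⟩ := hΦ _ _ hc.symm
  refine ⟨i, j, k, v, ?_⟩
  have := congrArg Units.val hv
  simpa [E] using this

/-- `θ` is a fifth root of two in a ring whose arithmetic resembles that of the ring of integers
of `ℚ(2 ^ (1 / 5))`. -/
structure IsFifthRoot {O : Type*} [CommRing O] (θ : O) : Prop where
  pow_five : θ ^ 5 = 2
  prime : Prime θ
  residue : ∀ x, θ ∣ x ∨ θ ∣ x - 1
  prime_five : Prime (1 + θ ^ 2)
  prime_three : Prime (1 - θ + θ ^ 2 - θ ^ 3 + θ ^ 4)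
  units : ∀ u : O, IsUnit u → ∃ (i j k : Fin 2) (v : O), u = Quint.ev θ (Quint.unit i j k) * v ^ 2

theorem field_of_card_eighty_one {F : Type*} [Field F] [Finite F] {β : F} (h5 : β ^ 5 = 2)
    (hc : Nat.card F ∣ 81) (hβ : 1 - β + β ^ 2 - β ^ 3 + β ^ 4 = 0) : Nat.card F = 81 := by
  have : Fintype F := Fintype.ofFinite F
  have h3 : (3 : F) = 0 := by linear_combination (1 + β) * hβ - h5
  have hq : (Nat.card F) ∈ Nat.divisors 81 := Nat.mem_divisors.mpr ⟨hc, by norm_num⟩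
  have h0 : β ≠ 0 := by
    rintro rfl
    simp at hβ
  have h1 : β ^ (Nat.card F - 1) = 1 := by
    rw [Nat.card_eq_fintype_card]
    exact FiniteField.pow_card_sub_one_eq_one β h0
  have hgt : 1 < Nat.card F := Finite.one_lt_card
  rw [show Nat.divisors 81 = {1, 3, 9, 27, 81} from by decide +kernel] at hq
  simp only [Finset.mem_insert, Finset.mem_singleton] at hq
  have hm : β ^ 5 = -1 := by linear_combination h5 + h3
  have h2 : β ^ 2 = 1 → False := by
    intro h
    have : β = -1 := by linear_combination hm - (β ^ 3 + β) * h
    rw [this] at hβ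
    exact one_ne_zero (α := F) (by linear_combination 2 * h3 - hβ)
  rcases hq with h | h | h | h | h
  · omega
  · rw [h] at h1
    exact (h2 h1).elim
  · rw [h] at h1
    have h1 : β ^ 8 = 1 := h1
    refine (h2 ?_).elim
    linear_combination (-β ^ 2) * h1 + (β ^ 5 - 1) * hm
  · rw [h] at h1
    have h1 : β ^ 26 = 1 := h1
    refine (h2 ?_).elim
    linear_combination (β - 1) * (β * (β ^ 20 - β ^ 15 + β ^ 10 - β ^ 5 + 1) * hm - h1)
  · exact h

theorem isFifthRoot (hθ : θ ^ 5 = 2) (hK : Module.finrank ℚ K = 5) : IsFifthRoot θ where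
  pow_five := hθ
  prime := prime_fifth_root hθ hK
  residue := residue_fifth_root hθ hK
  prime_five := prime_of_norm (by rw [(norm_generators hθ hK).2.2.1]; norm_num)
  units u hu := units_mod_squares hθ hK hu.unit
  prime_three := by
    have := isPrincipalIdealRing_of_pow_five_eq_two hθ hK
    set δ : 𝓞 K := 1 - θ + θ ^ 2 - θ ^ 3 + θ ^ 4 with hδ
    have hn : (Algebra.norm ℤ δ).natAbs = 81 := by
      have h := congrArg (Algebra.norm ℤ)
        (show (1 + θ) * δ = algebraMap ℤ (𝓞 K) 3 by
          rw [hδ]; simp only [map_ofNat]; linear_combination hθ)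
      rw [map_mul, (norm_generators hθ hK).2.1, Algebra.norm_algebraMap,
        RingOfIntegers.rank, hK] at h
      omega
    have hnu : ¬ IsUnit δ := by
      intro h
      have := h.map (Algebra.norm ℤ)
      rw [Int.isUnit_iff_natAbs_eq, hn] at this
      omega
    have hne : δ ≠ 0 := by
      intro h
      rw [h] at hn
      simp at hn
    obtain ⟨p, hp, c, hc⟩ := WfDvdMonoid.exists_irreducible_factor hnu hne
    have hpp : Prime p := hp.prime
    have hmul : (Algebra.norm ℤ p).natAbs * (Algebra.norm ℤ c).natAbs = 81 := by
      rw [← Int.natAbs_mul, ← map_mul, ← hc, hn]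
    have hcard : Nat.card (𝓞 K ⧸ Ideal.span {p}) = (Algebra.norm ℤ p).natAbs := by
      rw [← Submodule.cardQuot_apply, ← Ideal.absNorm_apply, Ideal.absNorm_span_singleton]
    have hmax : (Ideal.span {p}).IsMaximal := PrincipalIdealRing.isMaximal_of_irreducible hp
    let _ : Field (𝓞 K ⧸ Ideal.span {p}) := Ideal.Quotient.field _
    have hd : (Algebra.norm ℤ p).natAbs ∣ 81 := ⟨_, hmul.symm⟩
    have : Finite (𝓞 K ⧸ Ideal.span {p}) := Nat.finite_of_card_ne_zero (by
      rw [hcard]; rintro h; rw [h] at hd; omega)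
    have h81 := field_of_card_eighty_one (F := 𝓞 K ⧸ Ideal.span {p})
      (β := Ideal.Quotient.mk _ θ) (by rw [← map_pow, hθ, map_ofNat]) (hcard ▸ hd) (by
        have : Ideal.Quotient.mk (Ideal.span {p}) δ = 0 :=
          (Ideal.Quotient.eq_zero_iff_dvd _ _).mpr ⟨c, hc⟩
        simpa [hδ] using this)
    have hcu : IsUnit c := by
      rw [hcard] at h81
      rw [h81] at hmul
      have : (Algebra.norm ℤ c).natAbs = 1 := by omega
      have h1 : Ideal.absNorm (Ideal.span {c}) = 1 := by
        rwa [Ideal.absNorm_span_singleton]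
      rwa [Ideal.absNorm_eq_one_iff, Ideal.span_singleton_eq_top] at h1
    rw [hc]
    exact (associated_mul_unit_right p c hcu).prime hpp

end NumberFieldUnits

theorem exists_squarefree_mul_sq {R : Type*} [CommRing R] [IsDomain R] [WfDvdMonoid R]
    (z : R) (hz : z ≠ 0) : ∃ s y : R, z = s * y ^ 2 ∧ Squarefree s := by
  induction z using IsWellFounded.induction (DvdNotUnit (α := R)) with
  | ind z ih =>
    by_cases hs : Squarefree z
    · exact ⟨z, 1, by ring, hs⟩
    · unfold Squarefree at hs
      push Not at hs
      obtain ⟨x, ⟨c, hc⟩, hx⟩ := hs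
      have hc0 : c ≠ 0 := by rintro rfl; simp [hc] at hz
      obtain ⟨s, y, hy, hs⟩ := ih c ⟨hc0, x * x, fun h => hx (isUnit_of_mul_isUnit_left h),
        by rw [hc, mul_comm]⟩ hc0
      exact ⟨s, x * y, by rw [hc, hy]; ring, hs⟩

theorem Squarefree.exists_eq_mul_pow {R : Type*} [CommRing R] {s p : R} (hs : Squarefree s)
    (hp : Prime p) : ∃ (i : Fin 2) (r : R), s = r * p ^ (i : ℕ) ∧ ¬ p ∣ r ∧ Squarefree r := by
  by_cases h : p ∣ s
  · obtain ⟨r, rfl⟩ := h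
    refine ⟨1, r, by simp [mul_comm], ?_, hs.squarefree_of_dvd (dvd_mul_left r p)⟩
    intro hr
    exact hp.not_isUnit (hs p (mul_dvd_mul_left p hr))
  · exact ⟨0, s, by simp, h, hs⟩

section
variable {O : Type*} [CommRing O] [IsDomain O] [IsPrincipalIdealRing O] {θ : O}

omit [IsDomain O] [IsPrincipalIdealRing O] in
theorem IsFifthRoot.dvd_of_dvd_ten (h : IsFifthRoot θ) {p : O} (hp : Prime p)
    (hd : p ∣ 10 * (1 - θ + θ ^ 2 - θ ^ 3 + θ ^ 4)) :
    p ∣ θ ∨ p ∣ 1 + θ ^ 2 ∨ p ∣ 1 - θ + θ ^ 2 - θ ^ 3 + θ ^ 4 := by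
  have h5 := h.pow_five
  rcases hp.dvd_or_dvd hd with hd | hd
  · rw [show (10 : O) = θ ^ 5 * 5 by rw [h5]; norm_num] at hd
    rcases hp.dvd_or_dvd hd with hd | hd
    · exact Or.inl (hp.dvd_of_dvd_pow hd)
    · refine Or.inr (Or.inl (hp.dvd_of_dvd_pow (n := 5) (hd.trans
        ⟨1 + 4 * θ + θ ^ 2 + 2 * θ ^ 3 + 2 * θ ^ 4, ?_⟩)))
      linear_combination (2 + θ ^ 5 + 10 * θ + 5 * θ ^ 3) * h5
  · exact Or.inr (Or.inr hd)

theorem IsFifthRoot.eq_sUnit_mul (h : IsFifthRoot θ) {s : O} (hs : Squarefree s)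
    (hp : ∀ p, Prime p → p ∣ s → p ∣ 10 * (1 - θ + θ ^ 2 - θ ^ 3 + θ ^ 4)) :
    ∃ (i j k l m n : Fin 2) (v : O),
      s = Quint.ev θ (Quint.sUnit i j k l m) * θ ^ (n : ℕ) * v ^ 2 := by
  have hs0 : s ≠ 0 := hs.ne_zero
  obtain ⟨n, r₁, rfl, hr₁, hs₁⟩ := hs.exists_eq_mul_pow h.prime
  obtain ⟨m, r₂, rfl, hr₂, hs₂⟩ := hs₁.exists_eq_mul_pow h.prime_five
  obtain ⟨l, r₃, rfl, hr₃, hs₃⟩ := hs₂.exists_eq_mul_pow h.prime_three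
  have hu : IsUnit r₃ := by
    by_contra hu
    obtain ⟨p, hpi, hpd⟩ := WfDvdMonoid.exists_irreducible_factor hu hs₃.ne_zero
    have hpp := hpi.prime
    rcases h.dvd_of_dvd_ten hpp (hp p hpp (by
      rw [mul_assoc, mul_assoc]; exact hpd.mul_right _)) with hd | hd | hd
    · exact hr₁ (((hpp.associated_of_dvd h.prime hd).symm.dvd.trans hpd).mul_right _ |>.mul_right _)
    · exact hr₂ (((hpp.associated_of_dvd h.prime_five hd).symm.dvd.trans hpd).mul_right _)
    · exact hr₃ ((hpp.associated_of_dvd h.prime_three hd).symm.dvd.trans hpd)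
  obtain ⟨i, j, k, v, rfl⟩ := h.units r₃ hu
  refine ⟨i, j, k, l, m, n, v, ?_⟩
  rw [Quint.ev_sUnit h.pow_five]
  ring

theorem IsFifthRoot.eq_sUnit_mul_sq (h : IsFifthRoot θ) {z W v t : O} (hz : z ≠ 0) (hv : v ≠ 0)
    (ht : z * W * v ^ 2 = t ^ 2)
    (hp : ∀ p, Prime p → p ∣ z → p ∣ W → p ∣ 10 * (1 - θ + θ ^ 2 - θ ^ 3 + θ ^ 4)) :
    ∃ (i j k l m n : Fin 2) (y : O),
      z = Quint.ev θ (Quint.sUnit i j k l m) * θ ^ (n : ℕ) * y ^ 2 := by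
  obtain ⟨s, y, rfl, hs⟩ := exists_squarefree_mul_sq z hz
  have hy : y ≠ 0 := by rintro rfl; simp at hz
  obtain ⟨t', rfl⟩ : y * v ∣ t := by
    rw [← IsIntegrallyClosed.pow_dvd_pow_iff two_ne_zero, ← ht]
    exact ⟨s * W, by ring⟩
  have ht' : s * W = t' ^ 2 := by
    have : (y * v) ^ 2 ≠ 0 := pow_ne_zero _ (mul_ne_zero hy hv)
    apply mul_left_cancel₀ this
    linear_combination ht
  obtain ⟨i, j, k, l, m, n, w, hw⟩ := h.eq_sUnit_mul hs (fun p hpp hps => by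
    refine hp p hpp (hps.mul_right _) ?_
    by_contra hpW
    obtain ⟨r, hr⟩ : p ∣ t' := hpp.dvd_of_dvd_pow (n := 2) (ht' ▸ hps.mul_right _)
    obtain ⟨s', rfl⟩ := hps
    have h1 : p ∣ s' * W := ⟨r ^ 2, by
      apply mul_left_cancel₀ hpp.ne_zero
      rw [← mul_assoc, ht', hr]; ring⟩
    exact hpp.not_isUnit (hs p (mul_dvd_mul_left p ((hpp.dvd_or_dvd h1).resolve_right hpW))))
  exact ⟨i, j, k, l, m, n, w * y, by rw [hw]; ring⟩

end

/-- `x` lies in `θ ^ n V`, where `V` is the localization of `O` at the prime element `θ`. -/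
def Adic {O : Type*} [CommRing O] (θ : O) {K : Type*} [Field K] [Algebra O K] (n : ℕ) (x : K) :
    Prop :=
  ∃ A B : O, ¬ θ ∣ B ∧ x * algebraMap O K B = algebraMap O K (θ ^ n * A)

namespace Adic
variable {O : Type*} [CommRing O] {θ : O} {K : Type*} [Field K] [Algebra O K] {m n : ℕ} {x y : K}

theorem of_dvd (hp : Prime θ) {a : O} (h : θ ^ n ∣ a) : Adic θ n (algebraMap O K a) := by
  obtain ⟨c, rfl⟩ := h
  exact ⟨c, 1, hp.not_dvd_one, by simp⟩

theorem zero (hp : Prime θ) : Adic θ n (0 : K) := by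
  simpa using of_dvd (K := K) hp (dvd_zero (θ ^ n))

theorem of_algebraMap (hp : Prime θ) (a : O) : Adic θ 0 (algebraMap O K a) :=
  of_dvd hp (by simp)

theorem mono (h : Adic θ n x) (hmn : m ≤ n) : Adic θ m x := by
  obtain ⟨A, B, hB, e⟩ := h
  obtain ⟨k, rfl⟩ := Nat.exists_eq_add_of_le hmn
  exact ⟨θ ^ k * A, B, hB, by rw [e, pow_add, mul_assoc]⟩

theorem mul' (hp : Prime θ) (hx : Adic θ m x) (hy : Adic θ n y) : Adic θ (m + n) (x * y) := by
  obtain ⟨A, B, hB, e⟩ := hx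
  obtain ⟨A', B', hB', e'⟩ := hy
  refine ⟨A * A', B * B', fun h => (hp.dvd_or_dvd h).elim hB hB', ?_⟩
  rw [map_mul]
  calc _ = (x * algebraMap O K B) * (y * algebraMap O K B') := by ring
    _ = _ := by rw [e, e', ← map_mul]; congr 1; ring

theorem mul {k : ℕ} (hp : Prime θ) (hx : Adic θ m x) (hy : Adic θ n y) (hk : k ≤ m + n) :
    Adic θ k (x * y) :=
  (mul' hp hx hy).mono hk

theorem add (hp : Prime θ) (hx : Adic θ n x) (hy : Adic θ n y) : Adic θ n (x + y) := by
  obtain ⟨A, B, hB, e⟩ := hx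
  obtain ⟨A', B', hB', e'⟩ := hy
  refine ⟨A * B' + A' * B, B * B', fun h => (hp.dvd_or_dvd h).elim hB hB', ?_⟩
  rw [map_mul]
  calc _ = (x * algebraMap O K B) * algebraMap O K B' +
        (y * algebraMap O K B') * algebraMap O K B := by ring
    _ = _ := by rw [e, e', ← map_mul, ← map_mul, ← map_add]; congr 1; ring

theorem neg (hx : Adic θ n x) : Adic θ n (-x) := by
  obtain ⟨A, B, hB, e⟩ := hx
  exact ⟨-A, B, hB, by rw [neg_mul, e, ← map_neg]; congr 1; ring⟩

theorem sub (hp : Prime θ) (hx : Adic θ n x) (hy : Adic θ n y) : Adic θ n (x - y) := by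
  rw [sub_eq_add_neg]; exact add hp hx hy.neg

theorem iff_dvd [IsDomain O] [IsFractionRing O K] (hp : Prime θ) {a : O} :
    Adic θ n (algebraMap O K a) ↔ θ ^ n ∣ a := by
  refine ⟨?_, of_dvd hp⟩
  rintro ⟨A, B, hB, e⟩
  rw [← map_mul] at e
  have e := IsFractionRing.injective O K e
  exact hp.pow_dvd_of_dvd_mul_right n hB ⟨A, e⟩

theorem not_one [IsDomain O] [IsFractionRing O K] (hp : Prime θ) : ¬ Adic θ 1 (1 : K) := by
  rw [← map_one (algebraMap O K), iff_dvd hp, pow_one]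
  exact hp.not_dvd_one

theorem ne_zero [IsDomain O] [IsFractionRing O K] (hp : Prime θ) (hx : Adic θ 1 (x - 1)) :
    x ≠ 0 := by
  rintro rfl
  exact not_one (K := K) hp (by simpa using hx.neg)

theorem of_sub_one (hp : Prime θ) (hx : Adic θ 1 (x - 1)) : Adic θ 0 x := by
  have := (hx.mono zero_le_one).add hp (of_algebraMap (K := K) hp 1)
  simpa using this

theorem inv [IsDomain O] [IsFractionRing O K] (hp : Prime θ) (hx : Adic θ 1 (x - 1)) :
    Adic θ 0 x⁻¹ := by
  have h0 := ne_zero hp hx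
  obtain ⟨A, B, hB, e⟩ := hx
  refine ⟨B, B + θ * A, fun h => hB ((dvd_add_left (dvd_mul_right θ A)).mp h), ?_⟩
  rw [pow_one] at e
  rw [map_add, ← e, pow_zero, one_mul]
  field_simp
  ring

theorem inv_sub_one [IsDomain O] [IsFractionRing O K] (hp : Prime θ)
    (hx : Adic θ 1 (x - 1)) (hn : Adic θ n (x - 1)) : Adic θ n (x⁻¹ - 1) := by
  have h0 := ne_zero hp hx
  have : x⁻¹ - 1 = -((x - 1) * x⁻¹) := by field_simp; ring
  rw [this]
  exact (hn.mul hp (inv hp hx) (by simp)).neg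

theorem cancel [IsDomain O] [IsFractionRing O K] (hp : Prime θ) (hx : Adic θ 1 (x - 1))
    (h : Adic θ n (x * y)) : Adic θ n y := by
  have h0 := ne_zero hp hx
  have : y = x⁻¹ * (x * y) := by field_simp
  rw [this]
  exact (inv hp hx).mul hp h (by simp)

end Adic

namespace IsFifthRoot
variable {O : Type*} [CommRing O] [IsDomain O] [IsPrincipalIdealRing O] {θ : O}
  {K : Type*} [Field K] [Algebra O K] [IsFractionRing O K] {x y : K} {n : ℕ}

theorem exists_coprime_fraction (x : K) :
    ∃ A B : O, B ≠ 0 ∧ IsCoprime A B ∧ x * algebraMap O K B = algebraMap O K A := by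
  obtain ⟨A, B, hAB, hx⟩ := IsFractionRing.exists_reduced_fraction (A := O) (K := K) x
  refine ⟨A, B, nonZeroDivisors.coe_ne_zero B, isRelPrime_iff_isCoprime.mp hAB, ?_⟩
  rw [← hx, IsLocalization.mk'_spec]

theorem adic_or_inv (h : IsFifthRoot θ) (x : K) : Adic θ 0 x ∨ x ≠ 0 ∧ Adic θ 1 x⁻¹ := by
  obtain ⟨A, B, hB0, hAB, hx⟩ := exists_coprime_fraction (O := O) x
  by_cases hB : θ ∣ B
  · have hA : ¬ θ ∣ A := fun hA => h.prime.not_isUnit (hAB.isUnit_of_dvd' hA hB)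
    have hx0 : x ≠ 0 := by
      rintro rfl
      rw [zero_mul, eq_comm, map_eq_zero_iff _ (IsFractionRing.injective O K)] at hx
      exact hA (hx ▸ dvd_zero θ)
    obtain ⟨C, rfl⟩ := hB
    refine Or.inr ⟨hx0, C, A, hA, ?_⟩
    rw [← hx, pow_one]
    field_simp
  · exact Or.inl ⟨A, B, hB, by simpa using hx⟩

omit [IsDomain O] [IsPrincipalIdealRing O] [IsFractionRing O K] in
theorem adic_residue (h : IsFifthRoot θ) (hx : Adic θ 0 x) : Adic θ 1 x ∨ Adic θ 1 (x - 1) := by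
  obtain ⟨A, B, hB, e⟩ := hx
  rw [pow_zero, one_mul] at e
  rcases h.residue A with ⟨A', rfl⟩ | hA
  · exact Or.inl ⟨A', B, hB, by rw [e, pow_one]⟩
  · obtain ⟨c, hc⟩ := dvd_sub hA ((h.residue B).resolve_left hB)
    refine Or.inr ⟨c, B, hB, ?_⟩
    rw [sub_mul, e, pow_one, ← hc, one_mul, ← map_sub]
    congr 1
    ring

/-- One of two numbers with odd sum and even product is odd. -/
theorem adic_of_add_mul (h : IsFifthRoot θ) (hs : Adic θ 1 (x + y - 1)) (hm : Adic θ 1 (x * y)) :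
    Adic θ 1 (x - 1) ∨ Adic θ 1 (y - 1) := by
  have hp := h.prime
  have key : ∀ x y : K, Adic θ 1 (x + y - 1) → Adic θ 1 (x * y) → Adic θ 0 x := by
    intro x y hs hm
    rcases h.adic_or_inv x with hx | ⟨hx0, hx⟩
    · exact hx
    · exfalso
      have hy : Adic θ 0 y := by
        have : y = x⁻¹ * (x * y) := by field_simp
        rw [this]
        exact hx.mul hp hm (by simp)
      have hx' : Adic θ 0 x := by
        have : x = (x + y - 1) - (y - 1) := by ring
        rw [this]
        exact (hs.mono zero_le_one).sub hp (hy.sub hp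
          (by simpa using Adic.of_algebraMap (K := K) hp (1 : O)))
      refine Adic.not_one (O := O) (K := K) hp ?_
      rw [← inv_mul_cancel₀ hx0]
      exact hx.mul hp hx' (by simp)
  rcases h.adic_residue (key x y hs hm) with hx | hx
  · right
    have : y - 1 = (x + y - 1) - x := by ring
    rw [this]
    exact hs.sub hp hx
  · exact Or.inl hx

omit [IsPrincipalIdealRing O] in
/-- Hensel-type uniqueness of the odd root of `X ^ 2 - b X + c`. -/
theorem adic_sub_root (h : IsFifthRoot θ) {b c β γ κ : K} (hx : x ^ 2 - b * x + c = 0)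
    (hx1 : Adic θ 1 (x - 1)) (hβ1 : Adic θ 1 (β - 1)) (hκ1 : Adic θ 1 (κ - 1))
    (hκ : Adic θ n (κ ^ 2 - β * κ + γ)) (hb : Adic θ n (b - β)) (hc : Adic θ n (c - γ)) :
    Adic θ n (x - κ) := by
  have hp := h.prime
  have hu : Adic θ 1 (x + κ - β - 1 + 1 - 1) := by
    have : x + κ - β - 1 + 1 - 1 = (x - 1) + (κ - 1) - (β - 1) := by ring
    rw [this]
    exact (hx1.add hp hκ1).sub hp hβ1
  refine Adic.cancel hp (x := x + κ - β) (by simpa using hu) ?_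
  have : (x + κ - β) * (x - κ) = (b - β) * x - (c - γ) - (κ ^ 2 - β * κ + γ) := by
    linear_combination hx
  rw [this]
  exact ((hb.mul hp (Adic.of_sub_one hp hx1) (by simp)).sub hp hc).sub hp hκ

end IsFifthRoot

namespace Quint

theorem sUnit_odd : ∀ i j k l m : Fin 2, ¬ 2 ∣ (sUnit i j k l m).c0 := by decide +kernel

theorem not_dvd_ev_sUnit {R : Type*} [CommRing R] [IsDomain R] {θ : R} (hp : Prime θ)
    (h : θ ^ 5 = 2) (i j k l m : Fin 2) : ¬ θ ∣ ev θ (sUnit i j k l m) := by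
  intro hd
  obtain ⟨d, hd, -⟩ := dvd_shift (n := 0) hp h (by simpa using hd)
  exact sUnit_odd i j k l m ⟨d, hd⟩

end Quint

namespace IsFifthRoot
variable {O : Type*} [CommRing O] [IsDomain O] [IsPrincipalIdealRing O] {θ : O}
  {K : Type*} [Field K] [Algebra O K] [IsFractionRing O K]

omit [IsFractionRing O K] in
theorem exists_adic_sub (h : IsFifthRoot θ) {r : K} (hr : Adic θ 0 r) (n : ℕ) :
    ∃ Y : O, Adic θ n (r - algebraMap O K Y) := by
  obtain ⟨A, B, hB, e⟩ := id hr
  rw [pow_zero, one_mul] at e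
  obtain ⟨u, v, huv⟩ : IsCoprime (θ ^ n) B :=
    (h.prime.irreducible.coprime_iff_not_dvd.mpr hB).pow_left
  refine ⟨A * v, ?_⟩
  have : r - algebraMap O K (A * v) = r * algebraMap O K (1 - v * B) := by
    simp only [map_mul, map_sub, map_one, ← e]; ring
  rw [this]
  exact hr.mul h.prime (Adic.of_dvd h.prime (a := 1 - v * B) (n := n)
    ⟨u, by linear_combination -huv⟩) (by simp)

/-- A product of a square and a unit outside `10 δ` which is odd at `θ` determines the unit
modulo `θ ^ 11`, up to one of finitely many squares. -/
theorem adic_of_sUnit (h : IsFifthRoot θ) {x r : K} (hx : Adic θ 1 (x - 1))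
    {i j k l m n : Fin 2}
    (hxr : x = algebraMap O K (Quint.ev θ (Quint.sUnit i j k l m) * θ ^ (n : ℕ)) * r ^ 2) :
    n = 0 ∧ ∃ (a b c d e : Fin 2),
      Adic θ 11 (x - algebraMap O K (Quint.ev θ (Quint.mul (Quint.sUnit i j k l m)
        (Quint.mul (Quint.hat a b c d e) (Quint.hat a b c d e))))) := by
  have hp := h.prime
  have hx0 : ¬ Adic θ 1 x := fun h0 => Adic.not_one (O := O) (K := K) hp (by
    have := h0.sub hp hx
    simpa using this)
  have hg := Quint.not_dvd_ev_sUnit hp h.pow_five i j k l m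
  set g := Quint.ev θ (Quint.sUnit i j k l m) with hgd
  have hrV : Adic θ 0 r := by
    refine (h.adic_or_inv r).resolve_right ?_
    rintro ⟨hr0, hr⟩
    have : Adic θ 2 (algebraMap O K (g * θ ^ (n : ℕ))) := by
      have : algebraMap O K (g * θ ^ (n : ℕ)) = x * (r⁻¹ * r⁻¹) := by
        rw [hxr]; field_simp
      rw [this]
      exact (Adic.of_sub_one hp hx).mul hp (hr.mul' hp hr) (by simp)
    rw [Adic.iff_dvd hp] at this
    have h2 := hp.pow_dvd_of_dvd_mul_left 2 hg this
    have h3 := (pow_dvd_pow_iff hp.ne_zero hp.not_isUnit).mp h2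
    omega
  have hn : n = 0 := by
    by_contra hn
    have : n = 1 := by omega
    subst this
    apply hx0
    rw [hxr, pow_two]
    exact (Adic.of_dvd (n := 1) hp ⟨g, by simp [mul_comm]⟩).mul hp (hrV.mul' hp hrV) (by simp)
  subst hn
  refine ⟨rfl, ?_⟩
  simp only [Fin.val_zero, pow_zero, mul_one] at hxr
  have hr1 : Adic θ 1 (r - 1) := by
    refine (h.adic_residue hrV).resolve_left fun hr => hx0 ?_
    rw [hxr, pow_two]
    exact (Adic.of_algebraMap hp g).mul hp (hr.mul' hp hrV) (by simp)
  obtain ⟨Y, hY⟩ := h.exists_adic_sub hrV 11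
  have hY1 : θ ∣ Y - 1 := by
    have : Adic θ 1 (algebraMap O K (Y - 1)) := by
      have : algebraMap O K (Y - 1) = (r - 1) - (r - algebraMap O K Y) := by simp
      rw [this]
      exact hr1.sub hp (hY.mono (by norm_num))
    simpa using (Adic.iff_dvd hp).mp this
  obtain ⟨a, b, c, d, e, hh⟩ := exists_hat h.pow_five h.residue hY1
  refine ⟨a, b, c, d, e, ?_⟩
  rw [Quint.ev_mul h.pow_five, Quint.ev_mul h.pow_five, ← hgd]
  set s := Quint.ev θ (Quint.hat a b c d e)
  have : x - algebraMap O K (g * (s * s)) =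
      algebraMap O K g * ((r - algebraMap O K Y) * (r + algebraMap O K Y) +
        algebraMap O K (Y ^ 2 - s ^ 2)) := by
    rw [hxr]; simp only [map_mul, map_sub, map_pow]; ring
  rw [this]
  exact (Adic.of_algebraMap hp g).mul hp ((hY.mul hp (hrV.add hp (Adic.of_algebraMap hp _))
    (by simp)).add hp (Adic.of_dvd hp hh)) (by simp)

omit [IsPrincipalIdealRing O] in
theorem small_of_adic (h : IsFifthRoot θ) {x : K} {u v : Quint}
    (hu : Adic θ 11 (x - algebraMap O K (Quint.ev θ u)))
    (hv : Adic θ 11 (x - algebraMap O K (Quint.ev θ v))) : Quint.Small (Quint.sub u v) := by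
  refine Quint.small_of_dvd h.prime h.pow_five ((Adic.iff_dvd (K := K) h.prime).mp ?_)
  have : algebraMap O K (Quint.ev θ (Quint.sub u v)) =
      (x - algebraMap O K (Quint.ev θ v)) - (x - algebraMap O K (Quint.ev θ u)) := by
    rw [Quint.ev_sub, map_sub]; ring
  rw [this]
  exact hv.sub h.prime hu

theorem exists_sUnit_mul_sq (h : IsFifthRoot θ) {N w : K} (hN : N ≠ 0) {β γ : O}
    (hw : N ^ 2 + algebraMap O K β * N + algebraMap O K γ = N * w ^ 2)
    (hγ : ∀ p, Prime p → p ∣ γ → p ∣ 10 * (1 - θ + θ ^ 2 - θ ^ 3 + θ ^ 4)) :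
    ∃ (i j k l m n : Fin 2) (r : K),
      N = algebraMap O K (Quint.ev θ (Quint.sUnit i j k l m) * θ ^ (n : ℕ)) * r ^ 2 := by
  have hinj := IsFractionRing.injective O K
  obtain ⟨A, B, hB, hAB, hNe⟩ := exists_coprime_fraction (O := O) N
  obtain ⟨C, D, hD, -, hwe⟩ := exists_coprime_fraction (O := O) w
  have hBK : algebraMap O K B ≠ 0 := by rwa [Ne, map_eq_zero_iff _ hinj]
  have hA : A ≠ 0 := by
    rintro rfl
    rw [map_zero] at hNe
    exact mul_ne_zero hN hBK hNe
  obtain ⟨i, j, k, l, m, n, y, hy⟩ := h.eq_sUnit_mul_sq (z := A * B)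
    (W := A ^ 2 + β * (A * B) + γ * B ^ 2) (v := D)
    (t := A * B * C) (mul_ne_zero hA hB) hD (hinj (by
      simp only [map_mul, map_add, map_pow, ← hNe, ← hwe]
      linear_combination (N * algebraMap O K B ^ 4 * algebraMap O K D ^ 2) * hw)) (by
    intro p hp hpz hpW
    have hpAB : ¬ (p ∣ A ∧ p ∣ B) := fun hd => hp.not_isUnit (hAB.isUnit_of_dvd' hd.1 hd.2)
    rcases hp.dvd_or_dvd hpz with hd | hd
    · have : p ∣ γ * B ^ 2 := by
        have : γ * B ^ 2 = (A ^ 2 + β * (A * B) + γ * B ^ 2) - A * (A + β * B) := by ring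
        rw [this]
        exact dvd_sub hpW (hd.mul_right _)
      rcases hp.dvd_or_dvd this with h1 | h1
      · exact hγ p hp h1
      · exact (hpAB ⟨hd, hp.dvd_of_dvd_pow h1⟩).elim
    · have : p ∣ A ^ 2 := by
        have : A ^ 2 = (A ^ 2 + β * (A * B) + γ * B ^ 2) - B * (β * A + γ * B) := by ring
        rw [this]
        exact dvd_sub hpW (hd.mul_right _)
      exact (hpAB ⟨hp.dvd_of_dvd_pow this, hd⟩).elim)
  refine ⟨i, j, k, l, m, n, algebraMap O K y / algebraMap O K B, ?_⟩
  have := congrArg (algebraMap O K) hy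
  rw [map_mul, map_mul (algebraMap O K) (_ * _), map_pow (algebraMap O K) y] at this
  field_simp
  rw [pow_two, ← mul_assoc, hNe, this]

theorem exists_eq_sq (h : IsFifthRoot θ) {x N f w : K} (hx : Adic θ 1 (x - 1))
    (hxN : x = N * f ^ 2) {β γ : O}
    (hw : N ^ 2 + algebraMap O K β * N + algebraMap O K γ = N * w ^ 2)
    (hγ : ∀ p, Prime p → p ∣ γ → p ∣ 10 * (1 - θ + θ ^ 2 - θ ^ 3 + θ ^ 4))
    {u : Quint} (hu : Adic θ 11 (x - algebraMap O K (Quint.ev θ u)))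
    (hs : ∀ i j k l m a b c d e : Fin 2, Quint.Small (Quint.sub u (Quint.mul
      (Quint.sUnit i j k l m) (Quint.mul (Quint.hat a b c d e) (Quint.hat a b c d e)))) →
      i = 0 ∧ j = 0 ∧ k = 0 ∧ l = 0 ∧ m = 0) :
    ∃ r : K, x = r ^ 2 := by
  have hN : N ≠ 0 := by
    rintro rfl
    exact Adic.ne_zero h.prime hx (by simpa using hxN)
  obtain ⟨i, j, k, l, m, n, r, hr⟩ := h.exists_sUnit_mul_sq hN hw hγ
  have hxr : x = algebraMap O K (Quint.ev θ (Quint.sUnit i j k l m) * θ ^ (n : ℕ)) *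
      (r * f) ^ 2 := by
    rw [hxN]; nth_rw 1 [hr]; ring
  obtain ⟨rfl, a, b, c, d, e, hc⟩ := h.adic_of_sUnit hx hxr
  obtain ⟨rfl, rfl, rfl, rfl, rfl⟩ := hs i j k l m a b c d e (h.small_of_adic hu hc)
  refine ⟨r * f, ?_⟩
  rw [hxr, Quint.ev_sUnit h.pow_five, Quint.ev_unit h.pow_five]
  simp

end IsFifthRoot

namespace Quint

theorem dvd_ev_of_small {R : Type*} [CommRing R] {θ : R} (h : θ ^ 5 = 2) {x : Quint}
    (hx : Small x) : θ ^ 11 ∣ ev θ x := by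
  obtain ⟨⟨c0, h0⟩, ⟨c1, h1⟩, ⟨c2, h2⟩, ⟨c3, h3⟩, ⟨c4, h4⟩⟩ := hx
  refine ⟨c1 + c2 * θ + c3 * θ ^ 2 + c4 * θ ^ 3 + c0 * θ ^ 4, ?_⟩
  rw [ev, h0, h1, h2, h3, h4]
  push_cast
  have h10 : θ ^ 10 = 4 := by rw [show 10 = 5 * 2 from rfl, pow_mul, h]; norm_num
  linear_combination (-(θ * (c1 + c2 * θ + c3 * θ ^ 2 + c4 * θ ^ 3 + c0 * θ ^ 4))) * h10 -
    (4 * c0) * h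

theorem dvd_ev_of_even {R : Type*} [CommRing R] {θ : R} (h : θ ^ 5 = 2) {x : Quint}
    (hx : 2 ∣ x.c0) : θ ∣ ev θ x := by
  obtain ⟨d, hd⟩ := hx
  refine ⟨x.c1 + x.c2 * θ + x.c3 * θ ^ 2 + x.c4 * θ ^ 3 + d * θ ^ 4, ?_⟩
  rw [ev, hd]
  push_cast
  linear_combination -(d : R) * h

/-- The value of `κ ^ 2 - (1 + b ε) κ + c ε ^ 2`. -/
def quadratic (b c : ℤ) (ε κ : Quint) : Quint :=
  sub (mul κ κ) (sub (mul (sub one (mul ⟨-b, 0, 0, 0, 0⟩ ε)) κ)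
    (mul ⟨c, 0, 0, 0, 0⟩ (mul ε ε)))

theorem ev_quadratic {R : Type*} [CommRing R] {θ : R} (h : θ ^ 5 = 2) (b c : ℤ) (ε κ : Quint) :
    ev θ (quadratic b c ε κ) = ev θ κ ^ 2 - (1 + b * ev θ ε) * ev θ κ + c * ev θ ε ^ 2 := by
  have hb : ev θ ⟨-b, 0, 0, 0, 0⟩ = -(b : R) := by simp [ev]
  have hc : ev θ ⟨c, 0, 0, 0, 0⟩ = (c : R) := by simp [ev]
  simp only [quadratic, ev_sub, ev_mul h, ev_one, hb, hc]
  ring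

theorem odd_root_independent : ∀ i j k l m a b c d e : Fin 2,
    Small (sub ⟨5, 2, 2, 0, 3⟩ (mul (sUnit i j k l m) (mul (hat a b c d e) (hat a b c d e)))) →
      i = 0 ∧ j = 0 ∧ k = 0 ∧ l = 0 ∧ m = 0 := by decide +kernel

theorem not_small_sub : ∀ i j k l m a b c d e : Fin 2,
    ¬ Small (sub ⟨1, 2, 3, 3, 1⟩ (mul (sUnit i j k l m)
      (mul (hat a b c d e) (hat a b c d e)))) := by decide +kernel

end Quint

namespace IsFifthRoot
variable {O : Type*} [CommRing O] [IsDomain O] [IsPrincipalIdealRing O] {θ : O}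
  {K : Type*} [Field K] [Algebra O K] [IsFractionRing O K]

/-- The cofactor of `1 + θ` in `1 + θ ^ 5`. -/
def cofactor {O : Type*} [CommRing O] (θ : O) : O := 1 - θ + θ ^ 2 - θ ^ 3 + θ ^ 4

omit [IsDomain O] [IsPrincipalIdealRing O] [IsFractionRing O K] in
theorem map_pow_five (h : IsFifthRoot θ) : algebraMap O K θ ^ 5 = 2 := by
  rw [← map_pow, h.pow_five, map_ofNat]

omit [IsDomain O] [IsPrincipalIdealRing O] in
theorem map_ne_zero (h : IsFifthRoot θ) : algebraMap O K θ ≠ 0 := by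
  rw [Ne, map_eq_zero_iff _ (IsFractionRing.injective O K)]
  exact h.prime.ne_zero

omit [IsDomain O] [IsPrincipalIdealRing O] in
theorem two_ne_zero (h : IsFifthRoot θ) : (2 : K) ≠ 0 := by
  rw [← h.map_pow_five]
  exact pow_ne_zero _ h.map_ne_zero

omit [IsDomain O] [IsPrincipalIdealRing O] [IsFractionRing O K] in
theorem adic_pow (h : IsFifthRoot θ) (n : ℕ) : Adic θ n (algebraMap O K θ ^ n) := by
  rw [← map_pow]; exact Adic.of_dvd h.prime dvd_rfl

omit [IsDomain O] [IsPrincipalIdealRing O] [IsFractionRing O K] in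
theorem adic_ofNat (h : IsFifthRoot θ) (n : ℕ) : Adic θ 0 (n : K) := by
  rw [← map_natCast (algebraMap O K)]; exact Adic.of_algebraMap h.prime _

omit [IsDomain O] [IsPrincipalIdealRing O] [IsFractionRing O K] in
theorem adic_four (h : IsFifthRoot θ) : Adic θ 10 (4 : K) := by
  have : (4 : K) = algebraMap O K θ ^ 10 := by
    rw [show 10 = 5 * 2 from rfl, pow_mul, h.map_pow_five]; norm_num
  rw [this]
  exact h.adic_pow 10

/-- If the discriminant of `X ^ 2 - b X + c` is a square, `b` is odd and `c` is even, then the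
polynomial has an odd root. -/
theorem exists_odd_root (h : IsFifthRoot θ) {b c q : K} (hq : b ^ 2 - 4 * c = q ^ 2)
    (hb : Adic θ 1 (b - 1)) (hc : Adic θ 1 c) :
    ∃ ρ : K, Adic θ 1 (ρ - 1) ∧ ρ ^ 2 - b * ρ + c = 0 := by
  have h2 : (2 : K) ≠ 0 := h.two_ne_zero
  rcases h.adic_of_add_mul (x := (b + q) / 2) (y := (b - q) / 2)
    (by convert hb using 1; field_simp; ring)
    (by
      have : (b + q) / 2 * ((b - q) / 2) = c := by
        field_simp
        linear_combination hq
      rwa [this]) with h1 | h1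
  · exact ⟨_, h1, by field_simp; linear_combination -hq⟩
  · exact ⟨_, h1, by field_simp; linear_combination -hq⟩

/-- The quartic equation which is preserved by the descent, with `n ^ 2` of prescribed size
at `θ`. -/
def QuarticSolution (θ : O) (K : Type*) [Field K] [Algebra O K] (k : ℕ) : Prop :=
  ∃ n s ω : K, n ≠ 0 ∧
    n ^ 4 + 10 * algebraMap O K (cofactor θ) * n ^ 2 + 5 * algebraMap O K (cofactor θ) ^ 2
      = s ^ 2 ∧
    algebraMap O K (cofactor θ) = n ^ 2 * (4 ^ k * algebraMap O K θ ^ 2 * ω) ∧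
    Adic θ 10 (ω - 3 * (1 + algebraMap O K θ))

/-- The quartic equation on the isogenous curve. -/
def DualQuarticSolution (θ : O) (K : Type*) [Field K] [Algebra O K] (k : ℕ) : Prop :=
  ∃ n s ω : K, n ≠ 0 ∧
    n ^ 4 - 20 * algebraMap O K (cofactor θ) * n ^ 2 + 80 * algebraMap O K (cofactor θ) ^ 2
      = s ^ 2 ∧
    algebraMap O K (cofactor θ) = n ^ 2 * (4 ^ k * algebraMap O K θ ^ 2 * ω) ∧
    Adic θ 10 (ω - 3 * (1 + algebraMap O K θ))

omit [IsDomain O] [IsPrincipalIdealRing O] [IsFractionRing O K] in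
theorem adic_of_sub (h : IsFifthRoot θ) {ω : K}
    (hω : Adic θ 10 (ω - 3 * (1 + algebraMap O K θ))) : Adic θ 0 ω := by
  have : ω = (ω - 3 * (1 + algebraMap O K θ)) + algebraMap O K (3 * (1 + θ)) := by
    simp only [map_mul, map_add, map_one, map_ofNat]; ring
  rw [this]
  exact (hω.mono (by norm_num)).add h.prime (Adic.of_algebraMap h.prime _)

omit [IsDomain O] [IsPrincipalIdealRing O] [IsFractionRing O K] in
theorem adic_four_pow (h : IsFifthRoot θ) {ω : K}
    (hω : Adic θ 10 (ω - 3 * (1 + algebraMap O K θ))) (k : ℕ) :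
    Adic θ 12 (4 ^ (k + 1) * algebraMap O K θ ^ 2 * ω) := by
  rw [pow_succ', mul_assoc 4, mul_assoc 4]
  refine h.adic_four.mul h.prime (n := 2) ?_ le_rfl
  refine Adic.mul h.prime (m := 2) (n := 0) ?_ (h.adic_of_sub hω) le_rfl
  have := h.adic_ofNat (K := K) (4 ^ k)
  push_cast at this
  exact this.mul h.prime (h.adic_pow 2) (by simp)

omit [IsDomain O] [IsPrincipalIdealRing O] in
theorem dvd_of_dvd_mul_cofactor_sq {p : O} (hp : Prime p) {N : O} (hN : N ∣ 10 ^ 4)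
    (hd : p ∣ N * cofactor θ ^ 2) : p ∣ 10 * (1 - θ + θ ^ 2 - θ ^ 3 + θ ^ 4) := by
  rcases hp.dvd_or_dvd hd with hd | hd
  · exact (hp.dvd_of_dvd_pow (hd.trans hN)).mul_right _
  · exact (hp.dvd_of_dvd_pow hd).mul_left _

/-- The root `ρ` of the quadratic equation attached to a solution of the quartic. -/
theorem exists_root_of_quartic (h : IsFifthRoot θ) {n s e : K} (hn : n ≠ 0)
    (hs : n ^ 4 + 10 * algebraMap O K (cofactor θ) * n ^ 2 + 5 * algebraMap O K (cofactor θ) ^ 2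
      = s ^ 2)
    (he : algebraMap O K (cofactor θ) = n ^ 2 * e) (hea : Adic θ 1 e) :
    ∃ ρ : K, Adic θ 1 (ρ - 1) ∧ ρ ^ 2 - (1 + 5 * e) * ρ + 5 * e ^ 2 = 0 := by
  have h5 := h.adic_ofNat (K := K) 5
  push_cast at h5
  refine h.exists_odd_root (q := s / n ^ 2) ?_ ?_ ?_
  · rw [he] at hs
    field_simp
    linear_combination hs
  · rw [add_sub_cancel_left]
    exact h5.mul h.prime hea (by simp)
  · rw [pow_two]
    exact h5.mul h.prime (hea.mul' h.prime hea) (by simp)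

theorem exists_root_sq_of_quartic (h : IsFifthRoot θ) {n e ρ : K} (hn : n ≠ 0)
    (he : algebraMap O K (cofactor θ) = n ^ 2 * e)
    (hρ1 : Adic θ 1 (ρ - 1)) (hρ : ρ ^ 2 - (1 + 5 * e) * ρ + 5 * e ^ 2 = 0)
    {u : Quint} (hu : Adic θ 11 (ρ - algebraMap O K (Quint.ev θ u)))
    (hs : ∀ i j k l m a b c d e : Fin 2, Quint.Small (Quint.sub u (Quint.mul
      (Quint.sUnit i j k l m) (Quint.mul (Quint.hat a b c d e) (Quint.hat a b c d e)))) →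
      i = 0 ∧ j = 0 ∧ k = 0 ∧ l = 0 ∧ m = 0) :
    ∃ r : K, ρ = r ^ 2 := by
  have h2 : (2 : K) ≠ 0 := h.two_ne_zero
  refine h.exists_eq_sq (N := 4 * n ^ 2 * ρ) (f := 1 / (2 * n)) (w := 2 * n)
    (β := -20 * cofactor θ) (γ := 80 * cofactor θ ^ 2) hρ1 (by field_simp; ring) ?_
    (fun p hp => dvd_of_dvd_mul_cofactor_sq hp ⟨125, by norm_num⟩) hu hs
  simp only [map_mul, map_neg, map_ofNat, map_pow, he]
  linear_combination (16 * n ^ 4) * hρ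

theorem QuarticSolution.dual (h : IsFifthRoot θ) {k : ℕ} (hk : QuarticSolution θ K (k + 1)) :
    DualQuarticSolution θ K k := by
  obtain ⟨n, s, ω, hn, hs, he, hω⟩ := hk
  have hp := h.prime
  have h2 : (2 : K) ≠ 0 := h.two_ne_zero
  have h5 := h.adic_ofNat (K := K) 5
  push_cast at h5
  set e := 4 ^ (k + 1) * algebraMap O K θ ^ 2 * ω with hed
  have he12 : Adic θ 12 e := h.adic_four_pow hω k
  obtain ⟨ρ, hρ1, hρ⟩ := h.exists_root_of_quartic hn hs he (he12.mono (by norm_num))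
  have h5e : Adic θ 12 (5 * e) := h5.mul hp he12 (by simp)
  have h5e2 : Adic θ 12 (5 * e ^ 2) := by
    rw [pow_two]; exact h5.mul hp (he12.mul' hp he12) (by simp)
  have hρ11 : Adic θ 12 (ρ - 1) := by
    refine h.adic_sub_root hρ hρ1 (β := 1 + 5 * e) (γ := 5 * e ^ 2) ?_ ?_ ?_ ?_ ?_
    · simpa using h5e.mono (by norm_num)
    · simpa using Adic.zero hp
    · convert h5e2.sub hp h5e using 1; ring
    · simpa using Adic.zero hp
    · simpa using Adic.zero hp
  obtain ⟨r, rfl⟩ := h.exists_root_sq_of_quartic hn he hρ1 hρ (u := Quint.one)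
    (by rw [Quint.ev_one, map_one]; exact hρ11.mono (by norm_num)) Quint.sUnits_independent
  have hr0 : r ≠ 0 := by
    rintro rfl
    exact Adic.ne_zero hp hρ1 (by simp)
  refine ⟨2 * n * r, 2 * n * (2 * n * r), ω * (r ^ 2)⁻¹, by simp [h2, hn, hr0], ?_, ?_, ?_⟩
  · rw [he]
    linear_combination (16 * n ^ 4) * hρ
  · rw [he, hed]
    field_simp
    ring
  · have : ω * (r ^ 2)⁻¹ - 3 * (1 + algebraMap O K θ) =
        (ω - 3 * (1 + algebraMap O K θ)) + ω * ((r ^ 2)⁻¹ - 1) := by ring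
    rw [this]
    exact hω.add hp ((h.adic_of_sub hω).mul hp (Adic.inv_sub_one hp hρ1 hρ11) (by norm_num))

/-- The root `ρ` of the quadratic equation attached to a solution of the dual quartic. -/
theorem exists_root_of_dual_quartic (h : IsFifthRoot θ) {n s e : K} (hn : n ≠ 0)
    (hs : n ^ 4 - 20 * algebraMap O K (cofactor θ) * n ^ 2 + 80 * algebraMap O K (cofactor θ) ^ 2
      = s ^ 2)
    (he : algebraMap O K (cofactor θ) = n ^ 2 * e) (hea : Adic θ 1 e) :
    ∃ ρ : K, Adic θ 1 (ρ - 1) ∧ ρ ^ 2 - (1 - 10 * e) * ρ + 5 * e ^ 2 = 0 := by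
  have h5 := h.adic_ofNat (K := K) 5
  have h10 := h.adic_ofNat (K := K) 10
  push_cast at h5 h10
  refine h.exists_odd_root (q := s / n ^ 2) ?_ ?_ ?_
  · rw [he] at hs
    field_simp
    linear_combination hs
  · have : (1 : K) - 10 * e - 1 = -(10 * e) := by ring
    rw [this]
    exact (h10.mul h.prime hea (by simp)).neg
  · rw [pow_two]
    exact h5.mul h.prime (hea.mul' h.prime hea) (by simp)

theorem exists_root_sq_of_dual_quartic (h : IsFifthRoot θ) {n e ρ : K} (hn : n ≠ 0)
    (he : algebraMap O K (cofactor θ) = n ^ 2 * e)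
    (hρ1 : Adic θ 1 (ρ - 1)) (hρ : ρ ^ 2 - (1 - 10 * e) * ρ + 5 * e ^ 2 = 0)
    {u : Quint} (hu : Adic θ 11 (ρ - algebraMap O K (Quint.ev θ u)))
    (hs : ∀ i j k l m a b c d e : Fin 2, Quint.Small (Quint.sub u (Quint.mul
      (Quint.sUnit i j k l m) (Quint.mul (Quint.hat a b c d e) (Quint.hat a b c d e)))) →
      i = 0 ∧ j = 0 ∧ k = 0 ∧ l = 0 ∧ m = 0) :
    ∃ r : K, ρ = r ^ 2 := by
  refine h.exists_eq_sq (N := n ^ 2 * ρ) (f := 1 / n) (w := n)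
    (β := 10 * cofactor θ) (γ := 5 * cofactor θ ^ 2) hρ1 (by field_simp) ?_
    (fun p hp => dvd_of_dvd_mul_cofactor_sq hp ⟨2000, by norm_num⟩) hu hs
  simp only [map_mul, map_ofNat, map_pow, he]
  linear_combination (n ^ 4) * hρ

theorem DualQuarticSolution.dual (h : IsFifthRoot θ) {k : ℕ}
    (hk : DualQuarticSolution θ K (k + 1)) : QuarticSolution θ K (k + 1) := by
  obtain ⟨n, s, ω, hn, hs, he, hω⟩ := hk
  have hp := h.prime
  have h5 := h.adic_ofNat (K := K) 5
  have h10 := h.adic_ofNat (K := K) 10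
  push_cast at h5 h10
  set e := 4 ^ (k + 1) * algebraMap O K θ ^ 2 * ω with hed
  have he12 : Adic θ 12 e := h.adic_four_pow hω k
  obtain ⟨ρ, hρ1, hρ⟩ := h.exists_root_of_dual_quartic hn hs he (he12.mono (by norm_num))
  have h10e : Adic θ 12 (10 * e) := h10.mul hp he12 (by simp)
  have h5e2 : Adic θ 12 (5 * e ^ 2) := by
    rw [pow_two]; exact h5.mul hp (he12.mul' hp he12) (by simp)
  have hρ11 : Adic θ 12 (ρ - 1) := by
    refine h.adic_sub_root hρ hρ1 (β := 1 - 10 * e) (γ := 5 * e ^ 2) ?_ ?_ ?_ ?_ ?_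
    · simpa using (h10e.mono (m := 1) (by norm_num)).neg
    · simpa using Adic.zero hp
    · convert h5e2.add hp h10e using 1; ring
    · simpa using Adic.zero hp
    · simpa using Adic.zero hp
  obtain ⟨r, rfl⟩ := h.exists_root_sq_of_dual_quartic hn he hρ1 hρ (u := Quint.one)
    (by rw [Quint.ev_one, map_one]; exact hρ11.mono (by norm_num)) Quint.sUnits_independent
  have hr0 : r ≠ 0 := by
    rintro rfl
    exact Adic.ne_zero hp hρ1 (by simp)
  refine ⟨n * r, n ^ 2 * r, ω * (r ^ 2)⁻¹, by simp [hn, hr0], ?_, ?_, ?_⟩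
  · rw [he]
    linear_combination (n ^ 4) * hρ
  · rw [he, hed]
    field_simp
  · have : ω * (r ^ 2)⁻¹ - 3 * (1 + algebraMap O K θ) =
        (ω - 3 * (1 + algebraMap O K θ)) + ω * ((r ^ 2)⁻¹ - 1) := by ring
    rw [this]
    exact hω.add hp ((h.adic_of_sub hω).mul hp (Adic.inv_sub_one hp hρ1 hρ11) (by norm_num))

omit [IsPrincipalIdealRing O] in
/-- Congruence modulo `θ ^ 11` of the odd root of a quadratic polynomial. -/
theorem adic_root_sub_ev (h : IsFifthRoot θ) {e ρ : K} {b c : ℤ} (hρ1 : Adic θ 1 (ρ - 1))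
    (hρ : ρ ^ 2 - (1 + b * e) * ρ + c * e ^ 2 = 0) {ε κ : Quint}
    (he : Adic θ 11 (e - algebraMap O K (Quint.ev θ ε)))
    (hε : 2 ∣ ε.c0) (hκ1 : 2 ∣ κ.c0 - 1) (hκ : Quint.Small (Quint.quadratic b c ε κ)) :
    Adic θ 11 (ρ - algebraMap O K (Quint.ev θ κ)) := by
  have hp := h.prime
  have hb : Adic θ 0 (b : K) := by
    rw [← map_intCast (algebraMap O K)]; exact Adic.of_algebraMap hp _
  have hc : Adic θ 0 (c : K) := by
    rw [← map_intCast (algebraMap O K)]; exact Adic.of_algebraMap hp _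
  have he0 : Adic θ 0 (e + algebraMap O K (Quint.ev θ ε)) := by
    have : e + algebraMap O K (Quint.ev θ ε) =
        (e - algebraMap O K (Quint.ev θ ε)) + algebraMap O K (2 * Quint.ev θ ε) := by
      rw [map_mul, map_ofNat]; ring
    rw [this]
    exact (he.mono (by norm_num)).add hp (Adic.of_algebraMap hp _)
  refine h.adic_sub_root hρ hρ1 (β := 1 + b * algebraMap O K (Quint.ev θ ε))
    (γ := c * algebraMap O K (Quint.ev θ ε) ^ 2) ?_ ?_ ?_ ?_ ?_
  · rw [add_sub_cancel_left]
    exact hb.mul hp (Adic.of_dvd (n := 1) hp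
      (by simpa using Quint.dvd_ev_of_even h.pow_five hε)) (by simp)
  · rw [← map_one (algebraMap O K), ← map_sub, ← Quint.ev_one (θ := θ), ← Quint.ev_sub]
    exact Adic.of_dvd hp (by
      simpa using Quint.dvd_ev_of_even (x := Quint.sub κ Quint.one) h.pow_five hκ1)
  · have := Adic.of_dvd (K := K) hp (Quint.dvd_ev_of_small h.pow_five hκ)
    rw [Quint.ev_quadratic h.pow_five] at this
    simpa using this
  · have : 1 + b * e - (1 + b * algebraMap O K (Quint.ev θ ε)) =
      b * (e - algebraMap O K (Quint.ev θ ε)) := by ring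
    rw [this]
    exact hb.mul hp he (by simp)
  · have : c * e ^ 2 - c * algebraMap O K (Quint.ev θ ε) ^ 2 =
      c * ((e - algebraMap O K (Quint.ev θ ε)) * (e + algebraMap O K (Quint.ev θ ε))) := by ring
    rw [this]
    exact hc.mul hp (he.mul' hp he0) (by simp)

/-- The end of the descent: the last step is obstructed modulo `θ ^ 11`. -/
theorem not_dualQuarticSolution_zero (h : IsFifthRoot θ) : ¬ DualQuarticSolution θ K 0 := by
  rintro ⟨n, s, ω, hn, hs, he, hω⟩
  have hp := h.prime
  rw [pow_zero, one_mul] at he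
  set e := algebraMap O K θ ^ 2 * ω with hed
  have he2 : Adic θ 2 e := (h.adic_pow 2).mul hp (h.adic_of_sub hω) le_rfl
  have he11 : Adic θ 11 (e - algebraMap O K (Quint.ev θ ⟨0, 0, 3, 3, 0⟩)) := by
    have : e - algebraMap O K (Quint.ev θ ⟨0, 0, 3, 3, 0⟩) =
        algebraMap O K θ ^ 2 * (ω - 3 * (1 + algebraMap O K θ)) := by
      simp [Quint.ev, hed]; rw [map_ofNat]; ring
    rw [this]
    exact (h.adic_pow 2).mul hp hω (by norm_num)
  obtain ⟨ρ, hρ1, hρ⟩ := h.exists_root_of_dual_quartic hn hs he (he2.mono (by norm_num))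
  have hρ11 : Adic θ 11 (ρ - algebraMap O K (Quint.ev θ ⟨5, 2, 2, 0, 3⟩)) :=
    h.adic_root_sub_ev (b := -10) (c := 5) (e := e) hρ1
      (by push_cast; linear_combination hρ) he11 (by decide) (by decide) (by decide +kernel)
  obtain ⟨r, rfl⟩ := h.exists_root_sq_of_dual_quartic hn he hρ1 hρ hρ11
    Quint.odd_root_independent
  have hr2 : r ^ 2 ≠ 0 := Adic.ne_zero hp hρ1
  have hr0 : r ≠ 0 := by
    rintro rfl
    simp at hr2
  have hm : n * r ≠ 0 := mul_ne_zero hn hr0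
  have hs' : (n * r) ^ 4 + 10 * algebraMap O K (cofactor θ) * (n * r) ^ 2 +
      5 * algebraMap O K (cofactor θ) ^ 2 = (n ^ 2 * r) ^ 2 := by
    rw [he]
    linear_combination (n ^ 4) * hρ
  have hf : algebraMap O K (cofactor θ) = (n * r) ^ 2 * ((r ^ 2)⁻¹ * e) := by
    rw [he]
    field_simp
  have hf2 : Adic θ 2 ((r ^ 2)⁻¹ * e) := (Adic.inv hp hρ1).mul hp he2 (by simp)
  have hf11 : Adic θ 11 ((r ^ 2)⁻¹ * e - algebraMap O K (Quint.ev θ ⟨0, 2, 1, 1, 0⟩)) := by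
    refine Adic.cancel hp hρ1 ?_
    have h1 : Adic θ 11 (algebraMap O K (Quint.ev θ (Quint.sub ⟨0, 0, 3, 3, 0⟩
        (Quint.mul ⟨0, 2, 1, 1, 0⟩ ⟨5, 2, 2, 0, 3⟩)))) :=
      Adic.of_dvd hp (Quint.dvd_ev_of_small h.pow_five (by decide +kernel))
    rw [Quint.ev_sub, Quint.ev_mul h.pow_five, map_sub, map_mul] at h1
    have h2 := (Adic.of_algebraMap (K := K) hp (Quint.ev θ ⟨0, 2, 1, 1, 0⟩)).mul hp hρ11
      (k := 11) (by simp)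
    convert (he11.sub hp h2).add hp h1 using 1
    field_simp
    ring
  obtain ⟨σ, hσ1, hσ⟩ := h.exists_root_of_quartic hm hs' hf (hf2.mono (by norm_num))
  have hσ11 : Adic θ 11 (σ - algebraMap O K (Quint.ev θ ⟨1, 2, 3, 3, 1⟩)) :=
    h.adic_root_sub_ev (b := 5) (c := 5) (e := (r ^ 2)⁻¹ * e) hσ1
      (by push_cast; linear_combination hσ) hf11 (by decide) (by decide) (by decide +kernel)
  obtain ⟨t, ht⟩ := h.exists_root_sq_of_quartic hm hf hσ1 hσ hσ11
    fun i j k l m a b c d e hsm => (Quint.not_small_sub i j k l m a b c d e hsm).elim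
  obtain ⟨-, a, b, c, d, e', hsm⟩ := h.adic_of_sUnit (i := 0) (j := 0) (k := 0) (l := 0) (m := 0)
    (n := 0) (r := t) hσ1 (by
      rw [ht, Quint.ev_sUnit h.pow_five, Quint.ev_unit h.pow_five]; simp)
  exact Quint.not_small_sub _ _ _ _ _ _ _ _ _ _ (h.small_of_adic hσ11 hsm)

theorem not_quarticSolution (h : IsFifthRoot θ) (k : ℕ) : ¬ QuarticSolution θ K (k + 1) := by
  induction k with
  | zero => exact fun hk => h.not_dualQuarticSolution_zero (hk.dual h)
  | succ k ih => exact fun hk => ih ((hk.dual h).dual h)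

end IsFifthRoot

theorem zmod_eight_of_eq : ∀ a b c d : ZMod 8, a ^ 5 = 2 * b ^ 2 - c ^ 2 →
    d ^ 5 = 2 * c ^ 2 - b ^ 2 → 4 * a ≠ 0 ∨ 4 * b ≠ 0 → a = 1 ∧ d = 1 := by decide +kernel

theorem zmod_three_of_eq : ∀ a b d : ZMod 3, 2 * a ^ 5 + d ^ 5 = 3 * b ^ 2 → a - d = 0 := by
  decide +kernel

/-- Local information on the end terms of the progression. -/
theorem coprime_and_congruences {a b c d D : ℤ} (hD : D ≠ 0) (hg : Int.gcd (a ^ 5) (b ^ 2) = 1)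
    (h1 : b ^ 2 - a ^ 5 = D) (h2 : c ^ 2 - b ^ 2 = D) (h3 : d ^ 5 - c ^ 2 = D) :
    IsCoprime a d ∧ 3 ∣ a - d ∧ 8 ∣ a - 1 ∧ 8 ∣ d - 1 ∧ 2 * a ^ 5 + d ^ 5 = 3 * b ^ 2 ∧
      2 * d ^ 5 + a ^ 5 = 3 * c ^ 2 ∧ d ^ 2 - a ^ 2 ≠ 0 := by
  have hab : IsCoprime a b :=
    (IsCoprime.pow_iff (by norm_num) (by norm_num)).1 (Int.isCoprime_iff_gcd_eq_one.2 hg)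
  have e1 : 2 * a ^ 5 + d ^ 5 = 3 * b ^ 2 := by linear_combination h3 + h2 - 2 * h1
  have e2 : 2 * d ^ 5 + a ^ 5 = 3 * c ^ 2 := by linear_combination -h1 + 2 * h3 - h2
  have e3 : a ^ 5 = 2 * b ^ 2 - c ^ 2 := by linear_combination h2 - h1
  have e4 : d ^ 5 = 2 * c ^ 2 - b ^ 2 := by linear_combination h3 - h2
  have h3d : (3 : ℤ) ∣ a - d := by
    have := zmod_three_of_eq a b d (by exact_mod_cast congrArg (Int.cast : ℤ → ZMod 3) e1)
    exact_mod_cast (ZMod.intCast_zmod_eq_zero_iff_dvd _ 3).1 (by push_cast; exact this)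
  have hodd : 4 * (a : ZMod 8) ≠ 0 ∨ 4 * (b : ZMod 8) ≠ 0 := by
    by_contra! hcon
    have key : ∀ n : ℤ, 4 * (n : ZMod 8) = 0 → (2 : ℤ) ∣ n := by
      intro n hn
      have : ((4 * n : ℤ) : ZMod 8) = 0 := by push_cast; exact hn
      have := (ZMod.intCast_zmod_eq_zero_iff_dvd _ 8).1 this
      push_cast at this
      omega
    exact Int.prime_two.not_isUnit (hab.isUnit_of_dvd' (key a hcon.1) (key b hcon.2))
  obtain ⟨ha8, hd8⟩ := zmod_eight_of_eq a b c d
    (by exact_mod_cast congrArg (Int.cast : ℤ → ZMod 8) e3)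
    (by exact_mod_cast congrArg (Int.cast : ℤ → ZMod 8) e4) hodd
  have key8 : ∀ n : ℤ, (n : ZMod 8) = 1 → (8 : ℤ) ∣ n - 1 := by
    intro n hn
    have : ((n - 1 : ℤ) : ZMod 8) = 0 := by push_cast; rw [hn]; rfl
    exact_mod_cast (ZMod.intCast_zmod_eq_zero_iff_dvd _ 8).1 this
  have had : IsCoprime a d := by
    rw [Int.isCoprime_iff_gcd_eq_one]
    by_contra hne
    obtain ⟨p, hp, hpd⟩ := Nat.exists_prime_and_dvd hne
    have hp' := Nat.prime_iff_prime_int.1 hp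
    have hpa : (p : ℤ) ∣ a := (Int.natCast_dvd_natCast.2 hpd).trans (Int.gcd_dvd_left ..)
    have hpd' : (p : ℤ) ∣ d := (Int.natCast_dvd_natCast.2 hpd).trans (Int.gcd_dvd_right ..)
    obtain ⟨x, rfl⟩ := hpa
    obtain ⟨y, rfl⟩ := hpd'
    have hpb : (p : ℤ) ∣ b := by
      rcases eq_or_ne p 3 with rfl | hp3
      · refine hp'.dvd_of_dvd_pow (n := 2) ⟨3 ^ 3 * (2 * x ^ 5 + y ^ 5), ?_⟩
        push_cast at *
        linarith
      · have : (p : ℤ) ∣ 3 * b ^ 2 := ⟨p ^ 4 * (2 * x ^ 5 + y ^ 5), by rw [← e1]; ring⟩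
        rcases hp'.dvd_or_dvd this with hd | hd
        · exact absurd ((Nat.prime_dvd_prime_iff_eq hp Nat.prime_three).1 (by exact_mod_cast hd))
            hp3
        · exact hp'.dvd_of_dvd_pow hd
    exact hp'.not_isUnit (hab.isUnit_of_dvd' (Dvd.intro _ rfl) hpb)
  refine ⟨had, h3d, key8 a ha8, key8 d hd8, e1, e2, fun h0 => ?_⟩
  have := key8 a ha8
  have := key8 d hd8
  rcases mul_eq_zero.1 (show (d - a) * (d + a) = 0 by linear_combination h0) with h | h
  · apply hD
    obtain rfl : d = a := by linarith
    linarith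
  · omega

/-- The quartic factor of `(θ a) ^ 5 + d ^ 5`. -/
def quinticFactor {R : Type*} [CommRing R] (θ a d : R) : R :=
  θ ^ 4 * a ^ 4 - θ ^ 3 * a ^ 3 * d + θ ^ 2 * a ^ 2 * d ^ 2 - θ * a * d ^ 3 + d ^ 4

namespace IsFifthRoot
variable {O : Type*} [CommRing O] [IsDomain O] [IsPrincipalIdealRing O] {θ : O}
  {K : Type*} [Field K] [Algebra O K] [IsFractionRing O K]

theorem quinticFactor_eq {R : Type*} [CommRing R] (θ : R) {a d s t m : R} (ha : a ^ 2 = 1 + 16 * s)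
    (hd : d ^ 2 = 1 + 16 * t) (hm : a * d = 1 + 8 * m) :
    ∃ r, quinticFactor θ a d = cofactor θ - 8 * m * (θ ^ 3 + θ) + 16 * r := by
  refine ⟨θ ^ 4 * (2 * s + 16 * s ^ 2) - θ ^ 3 * s * (1 + 8 * m) + θ ^ 2 * (s + t + 16 * s * t) -
    θ * t * (1 + 8 * m) + (2 * t + 16 * t ^ 2), ?_⟩
  have h1 : quinticFactor θ a d = θ ^ 4 * (a ^ 2) ^ 2 - θ ^ 3 * a ^ 2 * (a * d) +
      θ ^ 2 * a ^ 2 * d ^ 2 - θ * (a * d) * d ^ 2 + (d ^ 2) ^ 2 := by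
    unfold quinticFactor; ring
  rw [h1, ha, hd, hm, cofactor]
  ring

theorem cofactor_mul {R : Type*} [CommRing R] {θ : R} (h : θ ^ 5 = 2) :
    (1 + θ) * cofactor θ = 3 := by
  unfold cofactor
  linear_combination h

theorem factor_mul {R : Type*} [CommRing R] {θ : R} (h : θ ^ 5 = 2) (a d : R) :
    (θ * a + d) * quinticFactor θ a d = 2 * a ^ 5 + d ^ 5 := by
  unfold quinticFactor
  linear_combination a ^ 5 * h

omit [IsDomain O] [IsPrincipalIdealRing O] in
theorem dvd_ten_mul_cofactor (h : IsFifthRoot θ) {a d : ℤ} (hc : IsCoprime a d)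
    (h3 : 3 ∣ a - d) {p : O} (hp : Prime p)
    (hz : p ∣ cofactor θ * quinticFactor θ (a : O) d)
    (hW : p ∣ (1 + θ) * (θ * (a : O) + d)) : p ∣ 10 * cofactor θ := by
  have h5 := h.pow_five
  have hnot : ¬ (p ∣ (a : O) ∧ p ∣ (d : O)) := by
    rintro ⟨h1, h2⟩
    have := hc.map (Int.castRingHom O)
    exact hp.not_isUnit (this.isUnit_of_dvd' h1 h2)
  have hfive : p ∣ 5 → p ∣ 10 * cofactor θ := fun hd =>
    (hd.trans ⟨2, by norm_num⟩).mul_right _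
  have htwo : p ∣ θ → p ∣ 10 * cofactor θ := fun hd =>
    (hd.trans ⟨5 * θ ^ 4, by linear_combination -5 * h5⟩).mul_right _
  rcases hp.dvd_or_dvd hz with hz | hz
  · exact hz.mul_left _
  rcases hp.dvd_or_dvd hW with hW | hW
  · obtain ⟨e, he⟩ := h3
    have had : (a : O) - d = 3 * e := by exact_mod_cast congrArg (Int.cast : ℤ → O) he
    have hp3 : p ∣ 3 := by rw [← cofactor_mul h5]; exact hW.mul_right _
    have hpad : p ∣ (a : O) - d := by rw [had]; exact hp3.mul_right _
    have : p ∣ 5 * (a : O) ^ 4 := by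
      have e : 5 * (a : O) ^ 4 = quinticFactor θ (a : O) d - (1 + θ) *
          (a ^ 4 * (θ ^ 3 - θ ^ 2 + θ - 1) - a ^ 3 * d * (θ ^ 2 - θ + 1) +
            a ^ 2 * d ^ 2 * (θ - 1) - a * d ^ 3) +
          (a - d) * (4 * a ^ 3 + 3 * a ^ 2 * d + 2 * a * d ^ 2 + d ^ 3) := by
        unfold quinticFactor; ring
      rw [e]
      exact (hz.sub (hW.mul_right _)).add (hpad.mul_right _)
    rcases hp.dvd_or_dvd this with hd | hd
    · exact hfive hd
    · have ha := hp.dvd_of_dvd_pow hd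
      exact absurd ⟨ha, by simpa using ha.sub hpad⟩ hnot
  · have : p ∣ 5 * (d : O) ^ 4 := by
      have e : 5 * (d : O) ^ 4 = quinticFactor θ (a : O) d - (θ * (a : O) + d) *
          (θ ^ 3 * a ^ 3 - 2 * θ ^ 2 * a ^ 2 * d + 3 * θ * a * d ^ 2 - 4 * d ^ 3) := by
        unfold quinticFactor; ring
      rw [e]
      exact hz.sub (hW.mul_right _)
    rcases hp.dvd_or_dvd this with hd | hd
    · exact hfive hd
    · have hd := hp.dvd_of_dvd_pow hd
      have : p ∣ θ * (a : O) := by simpa using hW.sub hd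
      rcases hp.dvd_or_dvd this with ha | ha
      · exact htwo ha
      · exact absurd ⟨ha, hd⟩ hnot

theorem exists_congruences {a d : ℤ} (ha : 8 ∣ a - 1) (hd : 8 ∣ d - 1) :
    ∃ s t m : ℤ, a ^ 2 = 1 + 16 * s ∧ d ^ 2 = 1 + 16 * t ∧ a * d = 1 + 8 * m := by
  obtain ⟨x, hx⟩ := ha
  obtain ⟨y, hy⟩ := hd
  obtain rfl : a = 1 + 8 * x := by linarith
  obtain rfl : d = 1 + 8 * y := by linarith
  exact ⟨x + 4 * x ^ 2, y + 4 * y ^ 2, x + y + 8 * x * y, by ring, by ring, by ring⟩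

omit [IsDomain O] [IsPrincipalIdealRing O] [IsFractionRing O K] in
theorem adic_cofactor (h : IsFifthRoot θ) : Adic θ 1 (cofactor (algebraMap O K θ) - 1) := by
  have := Adic.of_dvd (K := K) h.prime (n := 1) (a := cofactor θ - 1)
    ⟨-1 + θ - θ ^ 2 + θ ^ 3, by unfold cofactor; ring⟩
  simpa [cofactor] using this

omit [IsDomain O] [IsPrincipalIdealRing O] in
theorem adic_cancel_pow (h : IsFifthRoot θ) {m n : ℕ} {x : K}
    (hx : Adic θ (m + n) (algebraMap O K θ ^ m * x)) : Adic θ n x := by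
  obtain ⟨A, B, hB, he⟩ := hx
  refine ⟨A, B, hB, mul_left_cancel₀ (pow_ne_zero m (h.map_ne_zero (K := K))) ?_⟩
  rw [← mul_assoc, he]
  simp only [map_mul, map_pow]
  ring

theorem exists_eq_cofactor_mul_sq (h : IsFifthRoot θ) {a b d : ℤ} (hc : IsCoprime a d)
    (h3 : 3 ∣ a - d) (ha : 8 ∣ a - 1) (hd : 8 ∣ d - 1) (he : 2 * a ^ 5 + d ^ 5 = 3 * b ^ 2) :
    ∃ y : K, quinticFactor (algebraMap O K θ) (a : K) d =
      cofactor (algebraMap O K θ) * y ^ 2 := by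
  have h5 := h.pow_five
  have hp := h.prime
  set α := algebraMap O K θ with hα
  have hα5 : α ^ 5 = 2 := h.map_pow_five
  have hδ : cofactor α ≠ 0 := Adic.ne_zero hp h.adic_cofactor
  obtain ⟨s, t, m, hs, ht, hm⟩ := exists_congruences ha hd
  obtain ⟨r, hr⟩ := quinticFactor_eq θ (a := (a : O)) (d := d) (s := s) (t := t) (m := m)
    (by exact_mod_cast congrArg (Int.cast : ℤ → O) hs)
    (by exact_mod_cast congrArg (Int.cast : ℤ → O) ht)
    (by exact_mod_cast congrArg (Int.cast : ℤ → O) hm)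
  have hW : algebraMap O K (quinticFactor θ (a : O) d) = quinticFactor α (a : K) d := by
    simp [quinticFactor, hα]
  have hC : algebraMap O K (cofactor θ) = cofactor α := by simp [cofactor, hα]
  set x := quinticFactor α (a : K) d / cofactor α with hx
  have hWx : quinticFactor α (a : K) d = cofactor α * x := by rw [hx]; field_simp
  have hx1 : Adic θ 15 (x - 1) := by
    refine Adic.cancel hp h.adic_cofactor ?_
    have e : cofactor α * (x - 1) = algebraMap O K (quinticFactor θ (a : O) d - cofactor θ) := by
      rw [map_sub, hW, hC, hWx]; ring
    rw [e]
    refine Adic.of_dvd hp ⟨-m * (θ ^ 3 + θ) + 2 * r, ?_⟩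
    have h8 : θ ^ 15 = 8 := by rw [show 15 = 5 * 3 from rfl, pow_mul, h5]; norm_num
    rw [hr, h8]
    ring
  have hx0 : x ≠ 0 := Adic.ne_zero hp (hx1.mono (by norm_num))
  have hz : cofactor θ * quinticFactor θ (a : O) d ≠ 0 := by
    intro h0
    have := congrArg (algebraMap O K) h0
    rw [map_mul, hW, hC, hWx, map_zero] at this
    exact mul_ne_zero hδ (mul_ne_zero hδ hx0) this
  obtain ⟨i, j, k, l, n, e, y, hy⟩ := h.eq_sUnit_mul_sq (W := (1 + θ) * (θ * (a : O) + d))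
    (v := 1) (t := 3 * (b : O)) hz one_ne_zero (by
      have he' : 2 * (a : O) ^ 5 + d ^ 5 = 3 * b ^ 2 := by
        exact_mod_cast congrArg (Int.cast : ℤ → O) he
      linear_combination (cofactor θ * (1 + θ)) * factor_mul h5 (a : O) d +
        (2 * (a : O) ^ 5 + d ^ 5) * cofactor_mul h5 + 3 * he')
    (fun p hp hz hW => h.dvd_ten_mul_cofactor hc h3 hp hz hW)
  have hxr : x = algebraMap O K (Quint.ev θ (Quint.sUnit i j k l n) * θ ^ (e : ℕ)) *
      (algebraMap O K y / cofactor α) ^ 2 := by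
    have := congrArg (algebraMap O K) hy
    rw [map_mul, hW, hC, hWx, map_mul, map_pow] at this
    field_simp
    linear_combination this
  obtain ⟨rfl, a', b', c', d', e', hc⟩ := h.adic_of_sUnit (hx1.mono (by norm_num)) hxr
  obtain ⟨rfl, rfl, rfl, rfl, rfl⟩ := Quint.sUnits_independent i j k l n a' b' c' d' e'
    (h.small_of_adic (by rw [Quint.ev_one, map_one]; exact hx1.mono (by norm_num)) hc)
  refine ⟨algebraMap O K y / cofactor α, ?_⟩
  rw [hWx, hxr, Quint.ev_sUnit h5, Quint.ev_unit h5]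
  simp

/-- The identity underlying the map from the intersection of two quadrics to the quartic curve. -/
theorem quartic_identity {R : Type*} [CommRing R] {α δ a d q u v A D P Z T S : R}
    (h5 : α ^ 5 = 2) (hu : u = a * d) (hv : v = a ^ 2 + d ^ 2)
    (hA : A = (α ^ 2 * a ^ 2 - d ^ 2) ^ 2 * quinticFactor α d a +
      (α ^ 2 * d ^ 2 - a ^ 2) ^ 2 * quinticFactor α a d)
    (hD : D = α * (α ^ 2 - 1) * (a * d) * (d ^ 2 - a ^ 2))
    (hP : P = (α ^ 2 * a ^ 2 - d ^ 2) * (α ^ 2 * d ^ 2 - a ^ 2))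
    (hZ : Z = quinticFactor α a d * quinticFactor α d a) (hq : δ ^ 2 * q ^ 2 = Z)
    (hT : T = (-6 * u ^ 4 + 18 * u ^ 3 * v - 6 * u * v ^ 3) + α * (12 * u ^ 4 + 3 * u ^ 3 * v) +
      α ^ 2 * (6 * u ^ 4 + 6 * u ^ 3 * v) + α ^ 3 * (-12 * u ^ 4 + 9 * u ^ 3 * v - 3 * u * v ^ 3) +
      α ^ 4 * (24 * u ^ 4 - 30 * u ^ 2 * v ^ 2 + 6 * v ^ 4))
    (hS : S = -2 * u ^ 2 + α ^ 2 * (12 * u ^ 2 - 2 * v ^ 2) - 2 * α ^ 4 * u ^ 2) :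
    9 * ((A + 2 * P * δ * q) ^ 2 + 10 * D ^ 2 * (A + 2 * P * δ * q) + 5 * D ^ 4) =
      (T + 3 * δ * S * q) ^ 2 := by
  replace hA : A = (2 * u ^ 4 + 10 * u ^ 3 * v - 2 * u * v ^ 3) +
      α * (4 * u ^ 4 - u ^ 3 * v - 2 * u ^ 2 * v ^ 2) +
      α ^ 2 * (2 * u ^ 4 - 2 * u ^ 3 * v - u ^ 2 * v ^ 2) +
      α ^ 3 * (4 * u ^ 4 + 5 * u ^ 3 * v - u * v ^ 3) +
      α ^ 4 * (-8 * u ^ 2 * v ^ 2 + 2 * v ^ 4) := by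
    rw [hA, hu, hv]
    unfold quinticFactor
    linear_combination ((-a ^ 7 * d + 2 * a ^ 5 * d ^ 3 + 2 * a ^ 3 * d ^ 5 - a * d ^ 7) +
      α * (-a ^ 6 * d ^ 2 - a ^ 2 * d ^ 6) + α ^ 2 * (-a ^ 5 * d ^ 3 - a ^ 3 * d ^ 5) +
      α ^ 3 * (2 * a ^ 4 * d ^ 4)) * h5
  have hD2 : D ^ 2 = α * (-8 * u ^ 4 + 2 * u ^ 2 * v ^ 2) + α ^ 2 * (-4 * u ^ 4 + u ^ 2 * v ^ 2) +
      α ^ 4 * (8 * u ^ 4 - 2 * u ^ 2 * v ^ 2) := by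
    rw [hD, hu, hv]
    linear_combination (α * (a ^ 6 * d ^ 2 - 2 * a ^ 4 * d ^ 4 + a ^ 2 * d ^ 6)) * h5
  replace hZ : Z = (u ^ 4 + 4 * u ^ 3 * v - 2 * u * v ^ 3) +
      α * (-2 * u ^ 4 - u ^ 3 * v + 2 * u ^ 2 * v ^ 2) +
      α ^ 2 * (-u ^ 4 - 2 * u ^ 3 * v + u ^ 2 * v ^ 2) +
      α ^ 3 * (2 * u ^ 4 + 2 * u ^ 3 * v - u * v ^ 3) +
      α ^ 4 * (u ^ 4 - 3 * u ^ 2 * v ^ 2 + v ^ 4) := by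
    rw [hZ, hu, hv]
    unfold quinticFactor
    linear_combination ((-a ^ 7 * d - a ^ 5 * d ^ 3 - a ^ 3 * d ^ 5 - a * d ^ 7) +
      α * (a ^ 6 * d ^ 2 + a ^ 4 * d ^ 4 + a ^ 2 * d ^ 6) +
      α ^ 2 * (-a ^ 5 * d ^ 3 - a ^ 3 * d ^ 5) + α ^ 3 * (a ^ 4 * d ^ 4)) * h5
  replace hP : P = u ^ 2 + α ^ 2 * (2 * u ^ 2 - v ^ 2) + α ^ 4 * u ^ 2 := by
    rw [hP, hu, hv]; ring
  have E1 : 9 * (A ^ 2 + 10 * D ^ 2 * A + 5 * (D ^ 2) ^ 2) - T ^ 2 +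
      (36 * P ^ 2 - 9 * S ^ 2) * Z = 0 := by
    rw [hA, hD2, hT, hP, hS, hZ]
    linear_combination ((-288 * u ^ 7 * v - 288 * u ^ 6 * v ^ 2 + 72 * u ^ 5 * v ^ 3 + 72 *
      u ^ 4 * v ^ 4) + α * (576 * u ^ 8 + 3456 * u ^ 7 * v - 1440 * u ^ 5 * v ^ 3 - 36 * u
      ^ 4 * v ^ 4 + 144 * u ^ 3 * v ^ 5) + α ^ 2 * (288 * u ^ 7 * v + 216 * u ^ 5 * v ^ 3 -
      72 * u ^ 3 * v ^ 5) + α ^ 3 * (576 * u ^ 8 - 1152 * u ^ 7 * v - 1296 * u ^ 6 * v ^ 2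
      + 288 * u ^ 5 * v ^ 3 + 288 * u ^ 4 * v ^ 4) + α ^ 4 * (1152 * u ^ 8 + 1152 * u ^ 7 *
      v - 288 * u ^ 6 * v ^ 2 - 864 * u ^ 5 * v ^ 3 + 144 * u ^ 3 * v ^ 5) + α ^ 5 * (576 *
      u ^ 8 - 1872 * u ^ 6 * v ^ 2 + 1008 * u ^ 4 * v ^ 4 - 144 * u ^ 2 * v ^ 6)) * h5
  have E2 : 6 * P * (A + 5 * D ^ 2) - T * S = 0 := by
    rw [hA, hD2, hT, hP, hS]
    linear_combination ((-48 * u ^ 5 * v + 12 * u ^ 3 * v ^ 3) + α * (96 * u ^ 6 - 24 * u ^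
      4 * v ^ 2) + α ^ 2 * (48 * u ^ 5 * v - 12 * u ^ 3 * v ^ 3) + α ^ 3 * (288 * u ^ 6 -
      168 * u ^ 4 * v ^ 2 + 24 * u ^ 2 * v ^ 4)) * h5
  linear_combination E1 + 6 * δ * q * E2 + (36 * P ^ 2 - 9 * S ^ 2) * hq

omit [IsDomain O] [IsPrincipalIdealRing O] [IsFractionRing O K] in
theorem adic_two_pow (h : IsFifthRoot θ) (k : ℕ) : Adic θ (5 * k) (2 ^ k : K) := by
  rw [← h.map_pow_five, ← pow_mul]
  exact h.adic_pow _

/-- A number whose square is one modulo `16` is `1` or `-1` modulo `8`. -/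
theorem adic_sub_one_or_of_sq (h : IsFifthRoot θ) {q : K} (hq : Adic θ 20 (q ^ 2 - 1)) :
    Adic θ 15 (q - 1) ∨ Adic θ 15 (-q - 1) := by
  have hp := h.prime
  have h2 : (2 : K) ≠ 0 := h.two_ne_zero
  have hA2 : Adic θ 5 (2 : K) := by simpa using h.adic_two_pow (K := K) 1
  obtain ⟨t, rfl⟩ : ∃ t : K, q = 1 + 2 * t := ⟨(q - 1) / 2, by field_simp; ring⟩
  have hm : Adic θ 10 (t * (t + 1)) := by
    refine h.adic_cancel_pow (m := 10) ?_
    rw [show 10 = 5 * 2 from rfl, pow_mul, h.map_pow_five]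
    convert hq using 1
    ring
  rcases h.adic_or_inv t with ht | ⟨ht0, ht⟩
  · rcases h.adic_residue ht with ht | ht
    · left
      have : Adic θ 10 t := Adic.cancel hp (x := t + 1) (by simpa using ht) (by rwa [mul_comm])
      rw [add_sub_cancel_left]
      exact hA2.mul hp this le_rfl
    · right
      have : Adic θ 10 (t + 1) := Adic.cancel hp ht hm
      rw [show -(1 + 2 * t) - 1 = -(2 * (t + 1)) by ring]
      exact (hA2.mul hp this le_rfl).neg
  · have : (1 : K) = t * (t + 1) * (t⁻¹ * t⁻¹) - t⁻¹ := by field_simp; ring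
    refine absurd ?_ (Adic.not_one (K := K) hp)
    rw [this]
    exact (hm.mul hp (ht.mul' hp ht) (by norm_num)).sub hp ht

/-- The congruences modulo `16` which determine the size of the point on the quartic curve. -/
theorem exists_congruence_sixteen {R : Type*} [CommRing R] (θ : R) {a d s t m : R}
    (ha : a ^ 2 = 1 + 16 * s) (hd : d ^ 2 = 1 + 16 * t) (hm : a * d = 1 + 8 * m) :
    (∃ r, quinticFactor θ a d * quinticFactor θ d a - cofactor θ ^ 2 = 16 * r) ∧
    ∃ r, (θ ^ 2 * a ^ 2 - d ^ 2) ^ 2 * quinticFactor θ d a +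
      (θ ^ 2 * d ^ 2 - a ^ 2) ^ 2 * quinticFactor θ a d +
      2 * ((θ ^ 2 * a ^ 2 - d ^ 2) * (θ ^ 2 * d ^ 2 - a ^ 2)) * cofactor θ -
      4 * (cofactor θ * (θ ^ 2 - 1) ^ 2) = 16 * r := by
  obtain ⟨r, hr⟩ := quinticFactor_eq θ ha hd hm
  obtain ⟨r', hr'⟩ := quinticFactor_eq θ hd ha (by rw [mul_comm]; exact hm)
  have hP : θ ^ 2 * a ^ 2 - d ^ 2 = (θ ^ 2 - 1) + 16 * (θ ^ 2 * s - t) := by rw [ha, hd]; ring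
  have hP' : θ ^ 2 * d ^ 2 - a ^ 2 = (θ ^ 2 - 1) + 16 * (θ ^ 2 * t - s) := by rw [ha, hd]; ring
  rw [hP, hP']
  generalize θ ^ 2 * s - t = p
  generalize θ ^ 2 * t - s = p'
  generalize θ ^ 2 - 1 = β
  rw [hr, hr']
  generalize cofactor θ = δ
  generalize θ ^ 3 + θ = γ
  constructor
  · exact ⟨δ * (r + r') - δ * m * γ + 4 * m ^ 2 * γ ^ 2 - 8 * m * γ * (r + r') + 16 * r * r',
      by ring⟩
  · exact ⟨-m * γ * β ^ 2 + r * β ^ 2 + r' * β ^ 2 +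
      (2 * β * p + 16 * p ^ 2) * (δ - 8 * m * γ + 16 * r') +
      (2 * β * p' + 16 * p' ^ 2) * (δ - 8 * m * γ + 16 * r) +
      2 * δ * (β * (p + p') + 16 * p * p'), by ring⟩

omit [IsPrincipalIdealRing O] in
theorem quarticSolution_of_sq (h : IsFifthRoot θ) {a d o : ℤ} {k : ℕ} (ha : 8 ∣ a - 1)
    (hd : 8 ∣ d - 1) (ho : ¬ 2 ∣ o) (hk : d ^ 2 - a ^ 2 = 2 ^ (k + 1) * o) {y₁ y₂ : K}
    (h₁ : quinticFactor (algebraMap O K θ) (a : K) d = cofactor (algebraMap O K θ) * y₁ ^ 2)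
    (h₂ : quinticFactor (algebraMap O K θ) (d : K) a = cofactor (algebraMap O K θ) * y₂ ^ 2)
    (hy : Adic θ 15 (y₁ * y₂ - 1)) : QuarticSolution θ K k := by
  have hp := h.prime
  obtain ⟨s, t, m, hs, ht, hm⟩ := exists_congruences ha hd
  obtain ⟨-, r, hr⟩ := exists_congruence_sixteen θ (a := (a : O)) (d := d) (s := s) (t := t)
    (m := m) (by exact_mod_cast congrArg (Int.cast : ℤ → O) hs)
    (by exact_mod_cast congrArg (Int.cast : ℤ → O) ht)
    (by exact_mod_cast congrArg (Int.cast : ℤ → O) hm)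
  have h_int : ∀ n : ℤ, Adic θ 0 (n : K) := fun n => by
    rw [← map_intCast (algebraMap O K)]; exact Adic.of_algebraMap hp _
  have hA2 : Adic θ 5 (2 : K) := by simpa using h.adic_two_pow (K := K) 1
  have hA8 : Adic θ 15 (8 : K) := by
    have := h.adic_two_pow (K := K) 3
    norm_num at this
    exact this
  have h2 : (2 : K) ≠ 0 := h.two_ne_zero
  have hk' : (d : K) ^ 2 - a ^ 2 = 2 ^ (k + 1) * o := by
    exact_mod_cast congrArg (Int.cast : ℤ → K) hk
  have hodd : ∀ n : ℤ, ¬ 2 ∣ n → Adic θ 15 ((n : K) ^ 2 - 1) := by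
    intro n hn
    have : (8 : ℤ) ∣ n ^ 2 - 1 :=
      Int.eight_dvd_sq_sub_one_of_odd (Int.not_even_iff_odd.1 (by rwa [even_iff_two_dvd]))
    obtain ⟨w, hw⟩ := this
    have : (n : K) ^ 2 - 1 = 8 * w := by exact_mod_cast congrArg (Int.cast : ℤ → K) hw
    rw [this]
    exact hA8.mul hp (h_int w) le_rfl
  have hw1 := hodd (a * d * o) (by
    rw [Int.prime_two.dvd_mul, Int.prime_two.dvd_mul]
    omega)
  have hδ1 := h.adic_cofactor (K := K)
  have hC : algebraMap O K (cofactor θ) = cofactor (algebraMap O K θ) := by simp [cofactor]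
  have hβ1 : Adic θ 1 (-(algebraMap O K θ ^ 2 - 1) - 1) := by
    rw [show -(algebraMap O K θ ^ 2 - 1) - 1 = -algebraMap O K θ ^ 2 by ring]
    exact ((h.adic_pow 2).mono (by norm_num)).neg
  have hr' := congrArg (algebraMap O K) hr
  have hα5 : algebraMap O K θ ^ 5 = 2 := h.map_pow_five
  have hα0 : algebraMap O K θ ≠ 0 := h.map_ne_zero
  have hPP : Adic θ 0 (algebraMap O K ((θ ^ 2 * a ^ 2 - d ^ 2) * (θ ^ 2 * d ^ 2 - a ^ 2) *
    cofactor θ)) := Adic.of_algebraMap hp _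
  have hcof := cofactor_mul hα5
  simp only [map_mul, map_add, map_sub, map_pow, map_intCast, map_ofNat, hC, quinticFactor,
    map_one] at hr' hPP
  unfold QuarticSolution
  rw [hC]
  set α := algebraMap O K θ with hα
  set δ := cofactor α with hδ
  have hδ0 : δ ≠ 0 := Adic.ne_zero hp hδ1
  have hβ0 : α ^ 2 - 1 ≠ 0 := neg_ne_zero.1 (Adic.ne_zero hp hβ1)
  have h30 : (3 : K) ≠ 0 := Adic.ne_zero hp (by
    rw [show (3 : K) - 1 = 2 by norm_num]; exact hA2.mono (by norm_num))
  have hado : ((a * d * o : ℤ) : K) ≠ 0 := by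
    have := Adic.ne_zero hp (hw1.mono (by norm_num))
    exact fun h0 => this (by rw [h0]; ring)
  push_cast at hado hw1
  obtain ⟨⟨ha0, hd0⟩, ho0⟩ : ((a : K) ≠ 0 ∧ (d : K) ≠ 0) ∧ (o : K) ≠ 0 := by
    simpa [mul_ne_zero_iff] using hado
  set P := α ^ 2 * (a : K) ^ 2 - d ^ 2 with hP
  set P' := α ^ 2 * (d : K) ^ 2 - a ^ 2 with hP'
  set X := P * y₂ + P' * y₁ with hX
  set β := α ^ 2 - 1 with hβ
  have hXe : δ * X ^ 2 = (P ^ 2 * quinticFactor α d a + P' ^ 2 * quinticFactor α a d) +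
      2 * (P * P') * δ * (y₁ * y₂) := by
    rw [h₁, h₂, hX]; ring
  have h4 : α ^ 10 = 4 := by rw [show 10 = 5 * 2 from rfl, pow_mul, hα5]; norm_num
  have h16 : Adic θ 20 (16 : K) := by
    have := h.adic_two_pow (K := K) 4
    norm_num at this
    exact this
  set u := X ^ 2 / (4 * β ^ 2) with hu
  have h40 : (4 : K) ≠ 0 := by rw [← h4]; exact pow_ne_zero _ hα0
  have hXu : X ^ 2 = 4 * β ^ 2 * u := by rw [hu]; field_simp
  have hu1 : Adic θ 10 (u - 1) := by
    refine Adic.cancel hp hβ1 (Adic.cancel hp hβ1 (Adic.cancel hp hδ1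
      (h.adic_cancel_pow (m := 10) ?_)))
    rw [← hα, h4]
    have e : 4 * (δ * (-β * (-β * (u - 1)))) = 16 * algebraMap O K r +
        2 * (P * P' * δ * (y₁ * y₂ - 1)) := by
      unfold quinticFactor at hXe
      linear_combination hXe - δ * hXu + hr'
    rw [e]
    exact (h16.mul hp (Adic.of_algebraMap hp r) le_rfl).add hp
      (hA2.mul hp (n := 15) (hPP.mul hp hy (by simp)) le_rfl)
  have hu0 : u ≠ 0 := Adic.ne_zero hp (hu1.mono (by norm_num))
  have hX0 : X ≠ 0 := by
    rintro h0
    rw [h0] at hXu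
    simp [h40, hβ0, hu0] at hXu
  set D := α * β * (a * d) * (d ^ 2 - a ^ 2) with hD
  have hD' : D = α * β * (a * d) * (2 ^ (k + 1) * o) := by rw [hD, hk']
  have hD0 : D ≠ 0 := by rw [hD']; positivity
  obtain ⟨T, hT⟩ : ∃ T : K, 9 * ((δ * X ^ 2) ^ 2 + 10 * D ^ 2 * (δ * X ^ 2) + 5 * D ^ 4) =
      T ^ 2 := by
    rw [hXe]
    exact ⟨_, quartic_identity hα5 rfl rfl rfl rfl rfl rfl (by rw [h₁, h₂]; ring) rfl rfl⟩
  refine ⟨δ * X / D, δ * T / (3 * D ^ 2), (a * d * o) ^ 2 / (δ * u), by positivity, ?_, ?_, ?_⟩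
  · field_simp
    linear_combination hT
  · have h4k : (4 : K) ^ k = 2 ^ (k * 2) := by rw [pow_mul']; norm_num
    rw [hD', div_pow, mul_pow, hXu, h4k]
    field_simp
    ring
  · refine Adic.cancel hp hδ1 (Adic.cancel hp (hu1.mono (by norm_num)) ?_)
    have e : u * (δ * ((a * d * o) ^ 2 / (δ * u) - 3 * (1 + α))) =
        ((a * d * o : K) ^ 2 - 1) - 9 * (u - 1) - 8 := by
      field_simp
      linear_combination (-3 * u) * hcof
    have h9 := h.adic_ofNat (K := K) 9
    push_cast at h9
    rw [e]
    exact ((hw1.mono (by norm_num)).sub hp (h9.mul hp hu1 (by simp))).sub hp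
      (hA8.mono (by norm_num))

theorem not_coprime_of_progression (h : IsFifthRoot θ) {a b c d D : ℤ} (hD : D ≠ 0)
    (h1 : b ^ 2 - a ^ 5 = D) (h2 : c ^ 2 - b ^ 2 = D) (h3 : d ^ 5 - c ^ 2 = D) :
    Int.gcd (a ^ 5) (b ^ 2) ≠ 1 := by
  intro hg
  have hp := h.prime
  let K := FractionRing O
  obtain ⟨hc, h3d, ha, hd, e1, e2, hne⟩ := coprime_and_congruences hD hg h1 h2 h3
  obtain ⟨y₁, hy₁⟩ := h.exists_eq_cofactor_mul_sq (K := K) hc h3d ha hd e1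
  obtain ⟨y₂, hy₂⟩ := h.exists_eq_cofactor_mul_sq (K := K) hc.symm
    (by rwa [← dvd_neg, neg_sub]) hd ha e2
  obtain ⟨k, o, ho, hk⟩ : ∃ (k : ℕ) (o : ℤ), ¬ 2 ∣ o ∧ d ^ 2 - a ^ 2 = 2 ^ (k + 2) * o := by
    have hf : FiniteMultiplicity (2 : ℤ) (d ^ 2 - a ^ 2) :=
      Int.finiteMultiplicity_iff.2 ⟨by norm_num, hne⟩
    obtain ⟨o, ho, hno⟩ := hf.exists_eq_pow_mul_and_not_dvd
    have h4 : (2 : ℤ) ^ 2 ∣ d ^ 2 - a ^ 2 := by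
      obtain ⟨x, hx⟩ := ha
      obtain ⟨y, hy⟩ := hd
      obtain rfl : a = 1 + 8 * x := by linarith
      obtain rfl : d = 1 + 8 * y := by linarith
      exact ⟨(y - x) * (4 + 16 * (x + y)), by ring⟩
    have hle := hf.le_multiplicity_of_pow_dvd h4
    obtain ⟨k, hk⟩ := Nat.exists_eq_add_of_le' hle
    exact ⟨k, o, hno, by rw [← hk]; exact ho⟩
  obtain ⟨s, t, m, hs, ht, hm⟩ := exists_congruences ha hd
  obtain ⟨⟨r, hr⟩, -⟩ := exists_congruence_sixteen θ (a := (a : O)) (d := d) (s := s) (t := t)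
    (m := m) (by exact_mod_cast congrArg (Int.cast : ℤ → O) hs)
    (by exact_mod_cast congrArg (Int.cast : ℤ → O) ht)
    (by exact_mod_cast congrArg (Int.cast : ℤ → O) hm)
  have hq : Adic θ 20 ((y₁ * y₂) ^ 2 - 1) := by
    refine Adic.cancel hp h.adic_cofactor (Adic.cancel hp h.adic_cofactor ?_)
    have h16 : θ ^ 20 = 16 := by rw [show 20 = 5 * 4 from rfl, pow_mul, h.pow_five]; norm_num
    have := Adic.of_dvd (K := K) hp (Dvd.intro r (by rw [hr, h16]) :
      θ ^ 20 ∣ quinticFactor θ (a : O) d * quinticFactor θ (d : O) a - cofactor θ ^ 2)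
    convert this using 1
    have e : algebraMap O K (quinticFactor θ (a : O) d * quinticFactor θ (d : O) a -
        cofactor θ ^ 2) = quinticFactor (algebraMap O K θ) (a : K) d *
        quinticFactor (algebraMap O K θ) (d : K) a - cofactor (algebraMap O K θ) ^ 2 := by
      simp [quinticFactor, cofactor]
    rw [e, hy₁, hy₂]
    ring
  rcases h.adic_sub_one_or_of_sq hq with hy | hy
  · exact h.not_quarticSolution k (h.quarticSolution_of_sq ha hd ho hk hy₁ hy₂ hy)
  · exact h.not_quarticSolution k (h.quarticSolution_of_sq ha hd ho hk hy₁ (y₂ := -y₂)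
      (by rw [hy₂]; ring) (by rwa [mul_neg]))

end IsFifthRoot

theorem exists_fifth_root_field : ∃ (K : Type) (_ : Field K) (_ : NumberField K) (θ : 𝓞 K),
    θ ^ 5 = 2 ∧ Module.finrank ℚ K = 5 := by
  have hirr := irreducible_X_pow_five_sub_two
  have := Fact.mk hirr
  have hdeg : (X ^ 5 - C 2 : ℚ[X]).natDegree = 5 := natDegree_X_pow_sub_C
  let B := AdjoinRoot.powerBasis hirr.ne_zero
  have : FiniteDimensional ℚ (AdjoinRoot (X ^ 5 - C 2 : ℚ[X])) := B.finite
  have : NumberField (AdjoinRoot (X ^ 5 - C 2 : ℚ[X])) := {}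
  have hroot : AdjoinRoot.root (X ^ 5 - C 2 : ℚ[X]) ^ 5 = 2 := by
    have := AdjoinRoot.eval₂_root (X ^ 5 - C 2 : ℚ[X])
    simpa [sub_eq_zero] using this
  have h_int : IsIntegral ℤ (AdjoinRoot.root (X ^ 5 - C 2 : ℚ[X])) :=
    IsIntegral.of_pow (n := 5) (by norm_num) (by
      rw [hroot]; exact_mod_cast (isIntegral_algebraMap (R := ℤ) (x := (2 : ℤ))))
  obtain ⟨θ, hθ⟩ :=
    (IsIntegralClosure.isIntegral_iff (A := 𝓞 (AdjoinRoot (X ^ 5 - C 2 : ℚ[X])))).1 h_int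
  refine ⟨_, _, this, θ, ?_, ?_⟩
  · apply IsFractionRing.injective (𝓞 (AdjoinRoot (X ^ 5 - C 2 : ℚ[X])))
      (AdjoinRoot (X ^ 5 - C 2 : ℚ[X]))
    rw [map_pow, hθ, hroot]
    exact (map_ofNat _ 2).symm
  · rw [B.finrank, AdjoinRoot.powerBasis_dim, hdeg]

/-- There is no primitive non-constant arithmetic progression of integers of the
form `x₁⁵, x₂², x₃², x₄⁵`. -/
theorem no_AP_5225 :
    ¬ ∃ (x₁ x₂ x₃ x₄ d : ℤ), d ≠ 0 ∧
      Int.gcd (x₁ ^ 5) (x₂ ^ 2) = 1 ∧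
      x₂ ^ 2 - x₁ ^ 5 = d ∧
      x₃ ^ 2 - x₂ ^ 2 = d ∧
      x₄ ^ 5 - x₃ ^ 2 = d := by
  rintro ⟨x₁, x₂, x₃, x₄, d, hd, hg, h1, h2, h3⟩
  obtain ⟨K, _, _, θ, hθ, hK⟩ := exists_fifth_root_field
  have := isPrincipalIdealRing_of_pow_five_eq_two hθ hK
  exact (isFifthRoot hθ hK).not_coprime_of_progression hd h1 h2 h3 hg
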